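/- arXiv:1707.08330 — 4 statements merged into one kernel-verified Lean document; each statement's English description precedes it below -/
import Mathlib

section
/- In the quadric intersection algebra A_f, with d_{ij} = a_ib_j − a_jb_i (coefficients ordered x₁², x₁x₂, x₁x₃, x₁x₄, x₂², x₂x₃, x₂x₄, x₃², x₃x₄, x₄²), there is a well-defined K-derivation D on A_f determined by Dp = ½[p,ε], Dq = ½[q,ε], Dr = Ds = 0, where ε = d₁₂(pr+rp) + d₁₅(ps+qr+sp+rq) + d₂₅(qs+sq). -/
/-- The relations defining the algebra `A_f` associated to a pair of quadratic forms
`f₁ = Σ_{i≤j} aᵢⱼ xᵢxⱼ`, `f₂ = Σ_{i≤j} bᵢⱼ xᵢxⱼ` in four variables.  The coefficient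
vectors `a b : Fin 10 → K` list the coefficients of the monomials in the order
`x₁², x₁x₂, x₁x₃, x₁x₄, x₂², x₂x₃, x₂x₄, x₃², x₃x₄, x₄²`.  The generators are
`p = ι 0`, `q = ι 1`, `r = ι 2`, `s = ι 3`, and the relations derive from
`fᵢ(αp+βr, αq+βs, α, β) = 0` (`i = 1,2`) together with `[αp+βr, αq+βs] = 0`. -/
def qiRel (K : Type*) [Field K] (a b : Fin 10 → K) :
    FreeAlgebra K (Fin 4) → FreeAlgebra K (Fin 4) → Prop := fun u v =>
  letI p := FreeAlgebra.ι K (0 : Fin 4)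
  letI q := FreeAlgebra.ι K (1 : Fin 4)
  letI r := FreeAlgebra.ι K (2 : Fin 4)
  letI s := FreeAlgebra.ι K (3 : Fin 4)
  letI c : K → FreeAlgebra K (Fin 4) := algebraMap K _
  v = 0 ∧ (
    u = c (a 0) * p ^ 2 + c (a 1) * (p * q) + c (a 4) * q ^ 2
        + c (a 2) * p + c (a 5) * q + c (a 7) ∨
    u = c (a 0) * (p * r + r * p) + c (a 1) * (p * s + r * q) + c (a 4) * (q * s + s * q)
        + c (a 3) * p + c (a 6) * q + c (a 2) * r + c (a 5) * s + c (a 8) ∨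
    u = c (a 0) * r ^ 2 + c (a 1) * (r * s) + c (a 4) * s ^ 2
        + c (a 3) * r + c (a 6) * s + c (a 9) ∨
    u = c (b 0) * p ^ 2 + c (b 1) * (p * q) + c (b 4) * q ^ 2
        + c (b 2) * p + c (b 5) * q + c (b 7) ∨
    u = c (b 0) * (p * r + r * p) + c (b 1) * (p * s + r * q) + c (b 4) * (q * s + s * q)
        + c (b 3) * p + c (b 6) * q + c (b 2) * r + c (b 5) * s + c (b 8) ∨
    u = c (b 0) * r ^ 2 + c (b 1) * (r * s) + c (b 4) * s ^ 2
        + c (b 3) * r + c (b 6) * s + c (b 9) ∨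
    u = p * q - q * p ∨
    u = p * s + r * q - q * r - s * p ∨
    u = r * s - s * r)

/-- The algebra `A_f` associated to a pair of quadratic forms in four variables. -/
def QIAlg (K : Type*) [Field K] (a b : Fin 10 → K) := RingQuot (qiRel K a b)

noncomputable instance (K : Type*) [Field K] (a b : Fin 10 → K) : Ring (QIAlg K a b) :=
  inferInstanceAs (Ring (RingQuot _))

noncomputable instance (K : Type*) [Field K] (a b : Fin 10 → K) : Algebra K (QIAlg K a b) :=
  inferInstanceAs (Algebra K (RingQuot _))

/-- The generator `p` of the quadric intersection algebra. -/
noncomputable def qiP (K : Type*) [Field K] (a b : Fin 10 → K) : QIAlg K a b :=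
  RingQuot.mkAlgHom K _ (FreeAlgebra.ι K 0)

/-- The generator `q` of the quadric intersection algebra. -/
noncomputable def qiQ (K : Type*) [Field K] (a b : Fin 10 → K) : QIAlg K a b :=
  RingQuot.mkAlgHom K _ (FreeAlgebra.ι K 1)

/-- The generator `r` of the quadric intersection algebra. -/
noncomputable def qiR (K : Type*) [Field K] (a b : Fin 10 → K) : QIAlg K a b :=
  RingQuot.mkAlgHom K _ (FreeAlgebra.ι K 2)

/-- The generator `s` of the quadric intersection algebra. -/
noncomputable def qiS (K : Type*) [Field K] (a b : Fin 10 → K) : QIAlg K a b :=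
  RingQuot.mkAlgHom K _ (FreeAlgebra.ι K 3)

/-- `d i j = aᵢ bⱼ − aⱼ bᵢ` (1-based indices, as in the paper). -/
def qiD (K : Type*) [Field K] (a b : Fin 10 → K) (i j : Fin 10) : K :=
  a i * b j - a j * b i

section Identities

variable {K A : Type*} [Field K] [Ring A] [Algebra K A] {p q r s : A}

/-- The symmetric element `ε` with arbitrary coefficients `d`, `e`, `g`. -/
def qiEps (d e g : K) (p q r s : A) : A :=
  d • (p * r + r * p) + e • (p * s + q * r + s * p + r * q) + g • (q * s + s * q)

/-- The commutators of `p` and `q` with `ε` satisfy the linearisation of the quadratic relation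
in `p, q, r, s`: the latter is the commutator of `d p² + 2 e p q + g q²` with the relation
satisfied by `r, s`. -/
lemma qi_mixed_relation (hpq : q * p = p * q) (hps : s * p = p * s + r * q - q * r)
    (hrs : s * r = r * s) (d e g : K) (a : Fin 10 → K)
    (hf : a 0 • (r * r) + a 1 • (r * s) + a 4 • (s * s) + a 3 • r + a 6 • s + a 9 • (1 : A) = 0) :
    letI ε := qiEps d e g p q r s
    letI P := p * ε - ε * p
    letI Q := q * ε - ε * q
    a 0 • (P * r + r * P) + a 1 • (P * s + r * Q) + a 4 • (Q * s + s * Q)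
      + a 3 • P + a 6 • Q = 0 := by
  have hpq' (x : A) : q * (p * x) = p * (q * x) := by rw [← mul_assoc, hpq, mul_assoc]
  have hrs' (x : A) : s * (r * x) = r * (s * x) := by rw [← mul_assoc, hrs, mul_assoc]
  have hps' (x : A) : s * (p * x) = p * (s * x) + r * (q * x) - q * (r * x) := by
    rw [← mul_assoc, hps]; noncomm_ring
  set η := d • (p * p) + (2 * e) • (p * q) + g • (q * q) with hη
  have key := congrArg (fun x => η * x - x * η) hf
  simp only [mul_zero, zero_mul, sub_zero] at key
  rw [← key, hη]
  simp only [qiEps, mul_add, add_mul, mul_sub, sub_mul, smul_mul_assoc, mul_smul_comm, mul_assoc,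
    hpq, hpq', hrs, hrs', hps, hps', mul_one, one_mul]
  module

/-- The commutators of `p` and `q` with `ε` satisfy the linearisation of the commutation relation
between `p, q` and `r, s`. -/
lemma qi_mixed_commutation (hpq : q * p = p * q) (hps : s * p = p * s + r * q - q * r)
    (hrs : s * r = r * s) (t : K) (a b : Fin 10 → K)
    (hp : a 0 • (p * p) + a 1 • (p * q) + a 4 • (q * q) + a 2 • p + a 5 • q + a 7 • (1 : A) = 0)
    (hm : a 0 • (p * r + r * p) + a 1 • (p * s + r * q) + a 4 • (q * s + s * q)
        + a 3 • p + a 6 • q + a 2 • r + a 5 • s + a 8 • (1 : A) = 0)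
    (hr : a 0 • (r * r) + a 1 • (r * s) + a 4 • (s * s) + a 3 • r + a 6 • s + a 9 • (1 : A) = 0) :
    letI ε := qiEps (t * qiD K a b 0 1) (t * qiD K a b 0 4) (t * qiD K a b 1 4) p q r s
    letI P := p * ε - ε * p
    letI Q := q * ε - ε * q
    P * s + r * Q - Q * r - s * P = 0 := by
  have hpq' (x : A) : q * (p * x) = p * (q * x) := by rw [← mul_assoc, hpq, mul_assoc]
  have hrs' (x : A) : s * (r * x) = r * (s * x) := by rw [← mul_assoc, hrs, mul_assoc]
  have hps' (x : A) : s * (p * x) = p * (s * x) + r * (q * x) - q * (r * x) := by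
    rw [← mul_assoc, hps]; noncomm_ring
  have comm_zero {x : A} (y : A) (hx : x = 0) : (2 * t) • (x * y - y * x) = 0 := by simp [hx]
  have key := congrArg₂ (· + ·) (congrArg₂ (· + ·)
    (comm_zero (b 0 • (p * p) + b 1 • (p * q) + b 4 • (q * q) + b 2 • p + b 5 • q) hr)
    (comm_zero (b 0 • (p * r + r * p) + b 1 • (p * s + r * q) + b 4 • (q * s + s * q)
        + b 3 • p + b 6 • q + b 2 • r + b 5 • s) hm))
    (comm_zero (b 0 • (r * r) + b 1 • (r * s) + b 4 • (s * s) + b 3 • r + b 6 • s) hp)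
  simp only [add_zero] at key
  rw [← key]
  simp only [qiEps, qiD, mul_add, add_mul, mul_sub, sub_mul, smul_mul_assoc, mul_smul_comm,
    mul_assoc, hpq, hpq', hrs, hrs', hps, hps', mul_one, one_mul]
  module

/-- The inner derivation given by any `ε` satisfies the derivative of a quadratic relation. -/
lemma qi_inner_relation (ε : A) (a : Fin 10 → K)
    (hp : a 0 • (p * p) + a 1 • (p * q) + a 4 • (q * q) + a 2 • p + a 5 • q + a 7 • (1 : A) = 0) :
    letI P := p * ε - ε * p
    letI Q := q * ε - ε * q
    a 0 • (P * p + p * P) + a 1 • (P * q + p * Q) + a 4 • (Q * q + q * Q)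
      + a 2 • P + a 5 • Q = 0 := by
  have key := congrArg (fun x => x * ε - ε * x) hp
  simp only [mul_zero, zero_mul, sub_zero] at key
  rw [← key]
  simp only [mul_add, add_mul, mul_sub, sub_mul, smul_mul_assoc, mul_smul_comm, mul_assoc,
    mul_one, one_mul]
  module

/-- The inner derivation given by any `ε` satisfies the derivative of a commutation relation. -/
lemma qi_inner_commutation (hpq : q * p = p * q) (ε : A) :
    letI P := p * ε - ε * p
    letI Q := q * ε - ε * q
    P * q + p * Q - (Q * p + q * P) = 0 := by
  have hpq' (x : A) : q * (p * x) = p * (q * x) := by rw [← mul_assoc, hpq, mul_assoc]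
  simp only [mul_sub, sub_mul, mul_assoc, hpq, hpq']
  abel

end Identities

section Relations

variable {K : Type*} [Field K] {a b : Fin 10 → K}

/-- The quotient map from the free algebra onto `A_f`. -/
noncomputable def qiMk (K : Type*) [Field K] (a b : Fin 10 → K) :
    FreeAlgebra K (Fin 4) →ₐ[K] QIAlg K a b :=
  RingQuot.mkAlgHom K (qiRel K a b)

lemma qiMk_eq_zero {u : FreeAlgebra K (Fin 4)} (h : qiRel K a b u 0) : qiMk K a b u = 0 :=
  (RingQuot.mkAlgHom_rel K h).trans (map_zero _)

@[simp] lemma qiMk_ι_zero : qiMk K a b (FreeAlgebra.ι K 0) = qiP K a b := rfl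

@[simp] lemma qiMk_ι_one : qiMk K a b (FreeAlgebra.ι K 1) = qiQ K a b := rfl

@[simp] lemma qiMk_ι_two : qiMk K a b (FreeAlgebra.ι K 2) = qiR K a b := rfl

@[simp] lemma qiMk_ι_three : qiMk K a b (FreeAlgebra.ι K 3) = qiS K a b := rfl

lemma qi_pq : qiQ K a b * qiP K a b = qiP K a b * qiQ K a b := by
  have h := qiMk_eq_zero (K := K) (a := a) (b := b)
    ⟨rfl, .inr (.inr (.inr (.inr (.inr (.inr (.inl rfl))))))⟩
  simp only [map_sub, map_mul, qiMk_ι_zero, qiMk_ι_one] at h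
  exact (sub_eq_zero.mp h).symm

lemma qi_ps : qiS K a b * qiP K a b =
    qiP K a b * qiS K a b + qiR K a b * qiQ K a b - qiQ K a b * qiR K a b := by
  have h := qiMk_eq_zero (K := K) (a := a) (b := b)
    ⟨rfl, .inr (.inr (.inr (.inr (.inr (.inr (.inr (.inl rfl)))))))⟩
  simp only [map_sub, map_add, map_mul, qiMk_ι_zero, qiMk_ι_one, qiMk_ι_two, qiMk_ι_three] at h
  exact (sub_eq_zero.mp h).symm

lemma qi_rs : qiS K a b * qiR K a b = qiR K a b * qiS K a b := by
  have h := qiMk_eq_zero (K := K) (a := a) (b := b)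
    ⟨rfl, .inr (.inr (.inr (.inr (.inr (.inr (.inr (.inr rfl)))))))⟩
  simp only [map_sub, map_mul, qiMk_ι_two, qiMk_ι_three] at h
  exact (sub_eq_zero.mp h).symm

lemma qi_quadric_pq {c : Fin 10 → K} (hc : c = a ∨ c = b) :
    c 0 • (qiP K a b * qiP K a b) + c 1 • (qiP K a b * qiQ K a b)
      + c 4 • (qiQ K a b * qiQ K a b) + c 2 • qiP K a b + c 5 • qiQ K a b
      + c 7 • (1 : QIAlg K a b) = 0 := by
  rcases hc with rfl | rfl
  · simpa [Algebra.algebraMap_eq_smul_one, pow_two] using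
      qiMk_eq_zero (K := K) (a := c) (b := b) ⟨rfl, .inl rfl⟩
  · simpa [Algebra.algebraMap_eq_smul_one, pow_two] using
      qiMk_eq_zero (K := K) (a := a) (b := c) ⟨rfl, .inr (.inr (.inr (.inl rfl)))⟩

lemma qi_quadric_mixed {c : Fin 10 → K} (hc : c = a ∨ c = b) :
    c 0 • (qiP K a b * qiR K a b + qiR K a b * qiP K a b)
      + c 1 • (qiP K a b * qiS K a b + qiR K a b * qiQ K a b)
      + c 4 • (qiQ K a b * qiS K a b + qiS K a b * qiQ K a b)
      + c 3 • qiP K a b + c 6 • qiQ K a b + c 2 • qiR K a b + c 5 • qiS K a b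
      + c 8 • (1 : QIAlg K a b) = 0 := by
  rcases hc with rfl | rfl
  · simpa [Algebra.algebraMap_eq_smul_one] using
      qiMk_eq_zero (K := K) (a := c) (b := b) ⟨rfl, .inr (.inl rfl)⟩
  · simpa [Algebra.algebraMap_eq_smul_one] using
      qiMk_eq_zero (K := K) (a := a) (b := c) ⟨rfl, .inr (.inr (.inr (.inr (.inl rfl))))⟩

lemma qi_quadric_rs {c : Fin 10 → K} (hc : c = a ∨ c = b) :
    c 0 • (qiR K a b * qiR K a b) + c 1 • (qiR K a b * qiS K a b)
      + c 4 • (qiS K a b * qiS K a b) + c 3 • qiR K a b + c 6 • qiS K a b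
      + c 9 • (1 : QIAlg K a b) = 0 := by
  rcases hc with rfl | rfl
  · simpa [Algebra.algebraMap_eq_smul_one, pow_two] using
      qiMk_eq_zero (K := K) (a := c) (b := b) ⟨rfl, .inr (.inr (.inl rfl))⟩
  · simpa [Algebra.algebraMap_eq_smul_one, pow_two] using
      qiMk_eq_zero (K := K) (a := a) (b := c) ⟨rfl, .inr (.inr (.inr (.inr (.inr (.inl rfl)))))⟩

open TrivSqZeroExt in
/-- The homomorphism from the free algebra to the dual numbers over `A_f` that encodes the
derivation along the quotient map with prescribed values on the generators. -/
noncomputable def qiLift (x : Fin 4 → QIAlg K a b) :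
    FreeAlgebra K (Fin 4) →ₐ[K] DualNumber (QIAlg K a b) :=
  FreeAlgebra.lift K fun i => inl (qiMk K a b (FreeAlgebra.ι K i)) + inr (x i)

lemma fst_qiLift (x : Fin 4 → QIAlg K a b) (u : FreeAlgebra K (Fin 4)) :
    (qiLift x u).fst = qiMk K a b u := by
  have h : (TrivSqZeroExt.fstHom K (QIAlg K a b) (QIAlg K a b)).comp (qiLift x) = qiMk K a b := by
    ext i
    simp [qiLift]
  exact DFunLike.congr_fun h u

lemma snd_qiLift_ι (x : Fin 4 → QIAlg K a b) (i : Fin 4) :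
    (qiLift x (FreeAlgebra.ι K i)).snd = x i := by
  simp [qiLift]

lemma snd_qiLift_mul (x : Fin 4 → QIAlg K a b) (u v : FreeAlgebra K (Fin 4)) :
    (qiLift x (u * v)).snd = (qiLift x u).snd * qiMk K a b v + qiMk K a b u * (qiLift x v).snd := by
  simp [fst_qiLift, add_comm]

lemma snd_qiLift_algebraMap (x : Fin 4 → QIAlg K a b) (c : K) :
    (qiLift x (algebraMap K _ c)).snd = 0 := by
  rw [AlgHom.commutes]
  rfl

/-- A derivation along the quotient map that kills the relations descends to `A_f`. -/
lemma qi_derivation_of_rel (x : Fin 4 → QIAlg K a b)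
    (hx : ∀ u, qiRel K a b u 0 → (qiLift x u).snd = 0) :
    ∃ D : QIAlg K a b →ₗ[K] QIAlg K a b,
      (∀ u v, D (u * v) = D u * v + u * D v) ∧ ∀ i, D (qiMk K a b (FreeAlgebra.ι K i)) = x i := by
  have hrel : ∀ ⦃u v⦄, qiRel K a b u v → qiLift x u = qiLift x v := by
    rintro u v h
    obtain rfl : v = 0 := h.1
    rw [map_zero]
    exact TrivSqZeroExt.ext ((fst_qiLift x u).trans (qiMk_eq_zero h)) (hx u h)
  let φ : QIAlg K a b →ₐ[K] DualNumber (QIAlg K a b) := RingQuot.liftAlgHom K ⟨qiLift x, hrel⟩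
  have hφ (u) : φ (qiMk K a b u) = qiLift x u := RingQuot.liftAlgHom_mkAlgHom_apply K _ hrel u
  have hsurj : Function.Surjective (qiMk K a b) := RingQuot.mkAlgHom_surjective K _
  refine ⟨((TrivSqZeroExt.sndHom (QIAlg K a b) (QIAlg K a b)).restrictScalars K).comp φ.toLinearMap,
    fun u v => ?_, fun i => ?_⟩
  · obtain ⟨u, rfl⟩ := hsurj u
    obtain ⟨v, rfl⟩ := hsurj v
    rw [← map_mul]
    simpa [hφ] using snd_qiLift_mul x u v
  · simpa [hφ] using snd_qiLift_ι x i

end Relations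

/-- There is a well-defined `K`-derivation `D` on the quadric intersection algebra `A_f`
determined by `Dp = ½[p,ε]`, `Dq = ½[q,ε]`, `Dr = Ds = 0`, where
`ε = d₁₂(pr+rp) + d₁₅(ps+qr+sp+rq) + d₂₅(qs+sq)` and `dᵢⱼ = aᵢbⱼ − aⱼbᵢ`. -/
theorem qi_derivation_exists (K : Type*) [Field K] (h2 : (2 : K) ≠ 0) (h3 : (3 : K) ≠ 0)
    (a b : Fin 10 → K) :
    letI p := qiP K a b
    letI q := qiQ K a b
    letI r := qiR K a b
    letI s := qiS K a b
    letI ε : QIAlg K a b :=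
      algebraMap K _ (qiD K a b 0 1) * (p * r + r * p)
      + algebraMap K _ (qiD K a b 0 4) * (p * s + q * r + s * p + r * q)
      + algebraMap K _ (qiD K a b 1 4) * (q * s + s * q)
    ∃ D : QIAlg K a b →ₗ[K] QIAlg K a b,
      (∀ u v, D (u * v) = D u * v + u * D v) ∧
      D p = (2 : K)⁻¹ • (p * ε - ε * p) ∧
      D q = (2 : K)⁻¹ • (q * ε - ε * q) ∧
      D r = 0 ∧ D s = 0 := by
  set ε := qiEps ((2 : K)⁻¹ * qiD K a b 0 1)
    ((2 : K)⁻¹ * qiD K a b 0 4) ((2 : K)⁻¹ * qiD K a b 1 4)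
    (qiP K a b) (qiQ K a b) (qiR K a b) (qiS K a b) with hε
  obtain ⟨D, hD, hgen⟩ := qi_derivation_of_rel (a := a) (b := b)
    ![qiP K a b * ε - ε * qiP K a b, qiQ K a b * ε - ε * qiQ K a b, 0, 0] <| by
      rintro u ⟨-, h⟩
      rcases h with rfl | rfl | rfl | rfl | rfl | rfl | rfl | rfl | rfl <;>
      simp only [map_add, map_sub, TrivSqZeroExt.snd_add, TrivSqZeroExt.snd_sub,
        ← Algebra.smul_def, map_smul, TrivSqZeroExt.snd_smul, snd_qiLift_mul, snd_qiLift_ι,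
        snd_qiLift_algebraMap, pow_two, qiMk_ι_zero, qiMk_ι_one, qiMk_ι_two, qiMk_ι_three,
        Matrix.cons_val, mul_zero, zero_mul, add_zero, zero_add, smul_zero, sub_zero]
      · exact qi_inner_relation ε a (qi_quadric_pq (.inl rfl))
      · exact qi_mixed_relation qi_pq qi_ps qi_rs _ _ _ a (qi_quadric_rs (.inl rfl))
      · exact qi_inner_relation ε b (qi_quadric_pq (.inr rfl))
      · exact qi_mixed_relation qi_pq qi_ps qi_rs _ _ _ b (qi_quadric_rs (.inr rfl))
      · exact qi_inner_commutation qi_pq ε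
      · exact qi_mixed_commutation qi_pq qi_ps qi_rs _ a b (qi_quadric_pq (.inl rfl))
          (qi_quadric_mixed (.inl rfl)) (qi_quadric_rs (.inl rfl))
  refine ⟨D, hD, (hgen 0).trans ?_, (hgen 1).trans ?_, hgen 2, hgen 3⟩ <;>
  · simp only [Matrix.cons_val, hε, qiEps, mul_smul, ← smul_add, mul_smul_comm, smul_mul_assoc,
      ← smul_sub, ← Algebra.smul_def]
end

section
/- Let F(x,y) = y² + a₁xy + a₃y − (x³+a₂x²+a₄x+a₆) and f(x,y,z) = x³F(z/x, y/x) the associated ternary cubic. Then there is a K-algebra isomorphism θ : A_f → Mat₃(K[x,y]/(F)) given by x ↦ [[−x₀−a₂, −1, 0],[x₀²+a₂x₀+a₄, 0, y₀],[y₀+a₁x₀+a₃, 0, x₀]] and y ↦ [[0,0,0],[−a₁,0,−1],[1,0,0]], with θ(ξ) = x₀I₃ and θ(η) = y₀I₃. -/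
/-- The relations defining the algebra `A_f` associated to the ternary cubic
`f = A x³ + B y³ + C z³ + A₂ x²y + A₃ x²z + B₁ xy² + B₃ y²z + C₁ xz² + C₂ yz² + M xyz`
(with `C ≠ 0`): the relations derive from the identity `f(α, β, αx + βy) = 0`,
with generators `x = ι 0`, `y = ι 1`. -/
def tcRel (K : Type*) [Field K] (A B C A2 A3 B1 B3 C1 C2 M : K) :
    FreeAlgebra K (Fin 2) → FreeAlgebra K (Fin 2) → Prop := fun u v =>
  letI x := FreeAlgebra.ι K (0 : Fin 2)
  letI y := FreeAlgebra.ι K (1 : Fin 2)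
  letI c : K → FreeAlgebra K (Fin 2) := algebraMap K _
  v = 0 ∧ (
    u = c C * x ^ 3 + c C1 * x ^ 2 + c A3 * x + c A ∨
    u = c C * (x ^ 2 * y + x * y * x + y * x ^ 2) + c C1 * (x * y + y * x)
        + c C2 * x ^ 2 + c M * x + c A3 * y + c A2 ∨
    u = c C * (x * y ^ 2 + y * x * y + y ^ 2 * x) + c C2 * (x * y + y * x)
        + c C1 * y ^ 2 + c M * y + c B3 * x + c B1 ∨
    u = c C * y ^ 3 + c C2 * y ^ 2 + c B3 * y + c B)

/-- The algebra `A_f` associated to a ternary cubic. -/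
def TCAlg (K : Type*) [Field K] (A B C A2 A3 B1 B3 C1 C2 M : K) :=
  RingQuot (tcRel K A B C A2 A3 B1 B3 C1 C2 M)

noncomputable instance (K : Type*) [Field K] (A B C A2 A3 B1 B3 C1 C2 M : K) :
    Ring (TCAlg K A B C A2 A3 B1 B3 C1 C2 M) := inferInstanceAs (Ring (RingQuot _))

noncomputable instance (K : Type*) [Field K] (A B C A2 A3 B1 B3 C1 C2 M : K) :
    Algebra K (TCAlg K A B C A2 A3 B1 B3 C1 C2 M) := inferInstanceAs (Algebra K (RingQuot _))

/-- The generator `x` of the ternary cubic algebra `A_f`. -/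
noncomputable def tcX (K : Type*) [Field K] (A B C A2 A3 B1 B3 C1 C2 M : K) :
    TCAlg K A B C A2 A3 B1 B3 C1 C2 M :=
  RingQuot.mkAlgHom K _ (FreeAlgebra.ι K 0)

/-- The generator `y` of the ternary cubic algebra `A_f`. -/
noncomputable def tcY (K : Type*) [Field K] (A B C A2 A3 B1 B3 C1 C2 M : K) :
    TCAlg K A B C A2 A3 B1 B3 C1 C2 M :=
  RingQuot.mkAlgHom K _ (FreeAlgebra.ι K 1)

/-- The central element `ξ` of the ternary cubic algebra. -/
noncomputable def tcXi (K : Type*) [Field K] (A B C A2 A3 B1 B3 C1 C2 M : K) :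
    TCAlg K A B C A2 A3 B1 B3 C1 C2 M :=
  letI x := tcX K A B C A2 A3 B1 B3 C1 C2 M
  letI y := tcY K A B C A2 A3 B1 B3 C1 C2 M
  letI c : K → TCAlg K A B C A2 A3 B1 B3 C1 C2 M := algebraMap K _
  c (C ^ 2) * (x * y) ^ 2
    - (c C * y ^ 2 + c C2 * y + c B3) * (c C * x ^ 2 + c C1 * x + c A3)
    + c (C * M - C1 * C2) * (x * y) + c (A3 * B3)

section PeirceDecomposition

variable {K A ι : Type*} [CommRing K] [Ring A] [Algebra K A]

/-- The corner ring `e A e` of a `K`-algebra is a `K`-algebra. -/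
noncomputable instance IsIdempotentElem.Corner.instAlgebra {e : A} (he : IsIdempotentElem e) :
    Algebra K he.Corner :=
  RingHom.toAlgebra'
    { toFun := fun k => ⟨k • e, k • e, by simp [he.eq]⟩
      map_one' := Subtype.ext (one_smul K e)
      map_mul' := fun a b => Subtype.ext <| by
        change (a * b) • e = (a • e) * (b • e)
        rw [smul_mul_smul_comm, he.eq]
      map_zero' := Subtype.ext (zero_smul K e)
      map_add' := fun a b => Subtype.ext (add_smul a b e) }
    fun k a => Subtype.ext <| by
      change (k • e) * a.1 = a.1 * (k • e)
      have := (Subsemigroup.mem_corner_iff he).mp a.2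
      simp [this.1, this.2]

/-- The Peirce representation of `A` attached to a complete system `u i * w j` of matrix units
with corner idempotent `e`: the `(i, j)` entry of `a` is `w i * a * u j`. -/
noncomputable def peirceAlgHom [Fintype ι] [DecidableEq ι] {e : A} (he : IsIdempotentElem e)
    (u w : ι → A) (hw : ∀ i, e * w i = w i) (hu : ∀ i, u i * e = u i)
    (hwu : ∀ i j, w i * u j = if i = j then e else 0) (huw : ∑ i, u i * w i = 1) :
    A →ₐ[K] Matrix ι ι he.Corner :=
  have val_sum (f : ι → he.Corner) : (∑ i, f i).1 = ∑ i, (f i).1 :=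
    map_sum (NonUnitalRing.corner e).subtype f Finset.univ
  { toFun := fun a => Matrix.of fun i j => ⟨w i * a * u j, w i * a * u j, by
      simp only [← mul_assoc, hw]; simp only [mul_assoc, hu]⟩
    map_one' := by
      ext i j
      apply Subtype.ext
      change w i * 1 * u j = _
      rw [mul_one, hwu, Matrix.one_apply]
      split_ifs <;> rfl
    map_mul' := fun a b => by
      ext i j
      apply Subtype.ext
      rw [Matrix.mul_apply, val_sum]
      change w i * (a * b) * u j = ∑ k, (w i * a * u k) * (w k * b * u j)
      calc w i * (a * b) * u j = w i * a * (∑ k, u k * w k) * b * u j := by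
            simp only [huw, mul_one, mul_assoc]
        _ = _ := by simp only [Finset.mul_sum, Finset.sum_mul, mul_assoc]
    map_zero' := by
      ext i j
      apply Subtype.ext
      change w i * 0 * u j = 0
      rw [mul_zero, zero_mul]
    map_add' := fun a b => by
      ext i j
      exact Subtype.ext (by
        change w i * (a + b) * u j = w i * a * u j + w i * b * u j
        simp only [mul_add, add_mul])
    commutes' := fun k => by
      ext i j
      apply Subtype.ext
      change w i * algebraMap K A k * u j = _
      rw [Algebra.algebraMap_eq_smul_one, mul_smul_comm, mul_one, smul_mul_assoc, hwu,
        Matrix.algebraMap_matrix_apply]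
      split_ifs
      · rfl
      · exact smul_zero k }

theorem peirceAlgHom_apply_val [Fintype ι] [DecidableEq ι] {e : A} (he : IsIdempotentElem e)
    (u w : ι → A) (hw : ∀ i, e * w i = w i) (hu : ∀ i, u i * e = u i)
    (hwu : ∀ i j, w i * u j = if i = j then e else 0) (huw : ∑ i, u i * w i = 1)
    (a : A) (i j : ι) :
    (peirceAlgHom (K := K) he u w hw hu hwu huw a i j).1 = w i * a * u j :=
  rfl

theorem peirceAlgHom_injective [Fintype ι] [DecidableEq ι] {e : A} (he : IsIdempotentElem e)
    (u w : ι → A) (hw : ∀ i, e * w i = w i) (hu : ∀ i, u i * e = u i)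
    (hwu : ∀ i j, w i * u j = if i = j then e else 0) (huw : ∑ i, u i * w i = 1) :
    Function.Injective (peirceAlgHom (K := K) he u w hw hu hwu huw) := by
  rw [injective_iff_map_eq_zero]
  intro a ha
  have h0 (i j) : w i * a * u j = 0 := by
    rw [← peirceAlgHom_apply_val (K := K) he u w hw hu hwu huw, ha]
    rfl
  calc a = (∑ i, u i * w i) * a * ∑ j, u j * w j := by simp [huw]
    _ = ∑ i, ∑ j, u i * (w i * a * u j) * w j := by
      simp only [Finset.sum_mul, Finset.mul_sum, mul_assoc]
      exact Finset.sum_comm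
    _ = 0 := by simp [h0]

end PeirceDecomposition

section WeierstrassRelations

variable {K A : Type*} [CommRing K] [Ring A] [Algebra K A]

/-- The two relations of degree at least two in `y` already produce a full system of `3 × 3` matrix
units, with corner idempotent `e = x * y ^ 2`. -/
theorem exists_injective_matrix_rep {a₁ a₂ : K} {x y : A}
    (h3 : x * y ^ 2 + y * x * y + y ^ 2 * x + a₂ • y ^ 2 - a₁ • y = 1) (h4 : y ^ 3 = 0) :
    ∃ (e : A) (he : IsIdempotentElem e) (ρ : A →ₐ[K] Matrix (Fin 3) (Fin 3) he.Corner)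
      (t p q r s : he.Corner), Function.Injective ρ ∧
      ρ x = !![-t, -1, 0; p, 0, q; r, 0, s] ∧
      ρ y = !![0, 0, 0; -(algebraMap K _ a₁), 0, -1; 1, 0, 0] := by
  have hy : y * (y * y) = 0 := by simpa [pow_succ, mul_assoc] using h4
  have hyz (z : A) : y * (y * (y * z)) = 0 := by
    simpa only [mul_assoc, zero_mul] using congrArg (· * z) hy
  have hk : y * (y * (x * y)) = y + a₁ • (y * y) - y * (x * (y * y)) := by
    have := congrArg (y * ·) h3
    simp only [pow_two, mul_add, mul_sub, mul_assoc, mul_smul_comm, hy, hyz, mul_one, smul_zero,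
      add_zero] at this
    linear_combination (norm := module) this
  have hkz (z : A) : y * (y * (x * (y * z)))
      = y * z + a₁ • (y * (y * z)) - y * (x * (y * (y * z))) := by
    have := congrArg (· * z) hk
    simpa only [add_mul, sub_mul, mul_assoc, smul_mul_assoc] using this
  have hxx : y * (y * (x * (x * (y * y)))) =
      a₁ • (y * (x * (y * y))) - y * (x * (y * (x * (y * y)))) - a₂ • (y * y) := by
    have := congrArg (· * (x * (y * y))) h3
    simp only [pow_two, add_mul, sub_mul, mul_assoc, smul_mul_assoc, hkz, hy, mul_zero,
      smul_zero, add_zero, sub_zero, one_mul] at this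
    linear_combination (norm := module) this
  have he : IsIdempotentElem (x * (y * y)) := by
    simp [IsIdempotentElem, mul_assoc, hkz, hy]
  let u : Fin 3 → A := ![x * (y * y), -(y * y), y * (x * (y * y)) - a₁ • (y * y)]
  let w : Fin 3 → A := ![x * (y * y), x * (y * (y * (x * (x * (y * y))))) - x * (y * (y * x)),
    x * y - x * (y * (x * (y * y)))]
  have hw (i) : x * (y * y) * w i = w i := by
    fin_cases i <;> simp [w, mul_assoc, mul_sub, hkz, hk, hy, hyz, mul_add] <;> abel
  have hu (i) : u i * (x * (y * y)) = u i := by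
    fin_cases i <;> simp [u, mul_assoc, sub_mul, hkz, hy]
  have hwu (i j) : w i * u j = if i = j then x * (y * y) else 0 := by
    fin_cases i <;> fin_cases j <;>
      simp [u, w, mul_assoc, sub_mul, hkz, hy, mul_sub]
  have huw : ∑ i, u i * w i = 1 := by
    rw [← h3]
    simp [Fin.sum_univ_three, u, w, mul_assoc, sub_mul, hkz, hk, hy, hyz, mul_add, mul_sub, hxx,
      pow_two]
    module
  let ρ := peirceAlgHom (K := K) he u w hw hu hwu huw
  refine ⟨_, he, ρ, - ρ x 0 0, ρ x 1 0, ρ x 1 2, ρ x 2 0, ρ x 2 2,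
    peirceAlgHom_injective he u w hw hu hwu huw, ?_, ?_⟩
  · have hx : (Matrix.of fun i j => w i * x * u j) = !![w 0 * x * u 0, -(x * (y * y)), 0;
        w 1 * x * u 0, 0, w 1 * x * u 2; w 2 * x * u 0, 0, w 2 * x * u 2] := by
      ext i j
      fin_cases i <;> fin_cases j <;> try rfl
      all_goals simp [u, w, mul_assoc, sub_mul, hkz, hy, mul_sub]
    ext i j
    refine Subtype.ext ((congrFun₂ hx i j).trans ?_)
    fin_cases i <;> fin_cases j <;> try rfl
    exact (neg_neg _).symm
  · have hy : (Matrix.of fun i j => w i * y * u j) =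
        !![0, 0, 0; -(a₁ • (x * (y * y))), 0, -(x * (y * y)); x * (y * y), 0, 0] := by
      ext i j
      fin_cases i <;> fin_cases j <;>
        simp [u, w, mul_assoc, sub_mul, hkz, hy, mul_sub]
    ext i j
    refine Subtype.ext ((congrFun₂ hy i j).trans ?_)
    fin_cases i <;> fin_cases j <;> rfl

variable {B : Type*} [Ring B] [Algebra K B]

/-- The two remaining relations say that the entries of `X` are determined by a commuting pair
`(s, q)` satisfying the Weierstrass equation. -/
theorem matrix_entries_of_relations {a₁ a₂ a₃ a₄ a₆ : K} {t p q r s : B}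
    {X Y : Matrix (Fin 3) (Fin 3) B}
    (hX : X = !![-t, -1, 0; p, 0, q; r, 0, s])
    (hY : Y = !![0, 0, 0; -(algebraMap K B a₁), 0, -1; 1, 0, 0])
    (h1 : X ^ 3 + a₂ • X ^ 2 + a₄ • X + a₆ • 1 = 0)
    (h2 : X ^ 2 * Y + X * Y * X + Y * X ^ 2 + a₂ • (X * Y + Y * X) - a₁ • X + a₄ • Y - a₃ • 1 = 0) :
    t = s + a₂ • 1 ∧ r = q + a₁ • s + a₃ • 1 ∧ p = s ^ 2 + a₂ • s + a₄ • 1 ∧ q * s = s * q ∧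
      q ^ 2 + a₁ • (s * q) + a₃ • q = s ^ 3 + a₂ • s ^ 2 + a₄ • s + a₆ • 1 := by
  rw [Algebra.algebraMap_eq_smul_one] at hY
  have ht := congrFun₂ h2 0 2
  have hr := congrFun₂ h2 0 0
  have hp := congrFun₂ h2 1 2
  have hc := congrFun₂ h2 1 0
  have hF := congrFun₂ h1 2 2
  simp [hX, hY, pow_succ] at ht hr hp hc hF
  have ht' : t = s + a₂ • 1 := by linear_combination (norm := module) -ht
  have hr' : r = q + a₁ • s + a₃ • 1 := by
    linear_combination (norm := module) hr + a₁ • ht'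
  have hp' : p = s ^ 2 + a₂ • s + a₄ • 1 := by
    rw [pow_two]; linear_combination (norm := module) hp
  have hc' : q * s = s * q := by
    simp only [ht', hr', hp', pow_two, mul_add, add_mul, mul_smul_comm, smul_mul_assoc,
      mul_one, one_mul] at hc
    linear_combination (norm := module) hc
  refine ⟨ht', hr', hp', hc', ?_⟩
  simp only [hr', add_mul, smul_mul_assoc, one_mul] at hF
  simp only [pow_succ, pow_zero, one_mul]
  linear_combination (norm := module) -hF

open scoped IsMulCommutative in
/-- A commuting pair satisfying a Weierstrass equation is the image of the pair of coordinates
under a homomorphism from the affine coordinate ring. -/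
theorem exists_algHom_of_weierstrass {a₁ a₂ a₃ a₄ a₆ : K} {s q : B} (hc : q * s = s * q)
    (hF : q ^ 2 + a₁ • (s * q) + a₃ • q = s ^ 3 + a₂ • s ^ 2 + a₄ • s + a₆ • 1)
    {F : MvPolynomial (Fin 2) K}
    (hFdef : F = .X 1 ^ 2 + .C a₁ * .X 0 * .X 1 + .C a₃ * .X 1
        - (.X 0 ^ 3 + .C a₂ * .X 0 ^ 2 + .C a₄ * .X 0 + .C a₆)) :
    ∃ φ : (MvPolynomial (Fin 2) K ⧸ Ideal.span {F}) →ₐ[K] B,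
      φ (Ideal.Quotient.mk _ (.X 0)) = s ∧ φ (Ideal.Quotient.mk _ (.X 1)) = q := by
  have hcomm : ∀ a ∈ ({s, q} : Set B), ∀ b ∈ ({s, q} : Set B), a * b = b * a := by
    rintro a (rfl | rfl) b (rfl | rfl) <;> simp [hc]
  have := Algebra.isMulCommutative_adjoin K hcomm
  let s' : Algebra.adjoin K {s, q} := ⟨s, Algebra.subset_adjoin (by simp)⟩
  let q' : Algebra.adjoin K {s, q} := ⟨q, Algebra.subset_adjoin (by simp)⟩
  let g : MvPolynomial (Fin 2) K →ₐ[K] Algebra.adjoin K {s, q} := MvPolynomial.aeval ![s', q']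
  have hg : ∀ a ∈ Ideal.span {F}, g a = 0 := by
    intro a ha
    obtain ⟨b, rfl⟩ := Ideal.mem_span_singleton.mp ha
    have : g F = 0 := by
      have : q' ^ 2 + a₁ • (s' * q') + a₃ • q' = s' ^ 3 + a₂ • s' ^ 2 + a₄ • s' + a₆ • 1 :=
        Subtype.ext hF
      simp only [g, hFdef, map_sub, map_add, map_mul, map_pow, MvPolynomial.aeval_X,
        MvPolynomial.aeval_C, Algebra.algebraMap_eq_smul_one]
      simp
      rw [this, sub_self]
    rw [map_mul, this, zero_mul]
  refine ⟨(Algebra.adjoin K {s, q}).val.comp (Ideal.Quotient.liftₐ _ g hg), ?_, ?_⟩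
  · change ((g (.X 0) : Algebra.adjoin K {s, q}) : B) = s
    simp [g, s']
  · change ((g (.X 1) : Algebra.adjoin K {s, q}) : B) = q
    simp [g, q']

end WeierstrassRelations

section WeierstrassMatrices

variable {K R : Type*} [CommRing K] [CommRing R] [Algebra K R]

/-- The image of the first generator in `Mat₃(R)`. -/
def weierstrassX (a₁ a₂ a₃ a₄ : K) (x₀ y₀ : R) : Matrix (Fin 3) (Fin 3) R :=
  !![-x₀ - algebraMap K R a₂, -1, 0;
     x₀ ^ 2 + algebraMap K R a₂ * x₀ + algebraMap K R a₄, 0, y₀;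
     y₀ + algebraMap K R a₁ * x₀ + algebraMap K R a₃, 0, x₀]

variable (R) in
/-- The image of the second generator in `Mat₃(R)`. -/
def weierstrassY (a₁ : K) : Matrix (Fin 3) (Fin 3) R :=
  !![0, 0, 0; -(algebraMap K R a₁), 0, -1; 1, 0, 0]

variable {a₁ a₂ a₃ a₄ a₆ : K} {x₀ y₀ : R}

theorem weierstrassX_mul_self :
    weierstrassX a₁ a₂ a₃ a₄ x₀ y₀ * weierstrassX a₁ a₂ a₃ a₄ x₀ y₀ =
      !![x₀ ^ 2 + 2 * algebraMap K R a₂ * x₀ + algebraMap K R a₂ ^ 2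
           - (x₀ ^ 2 + algebraMap K R a₂ * x₀ + algebraMap K R a₄), x₀ + algebraMap K R a₂, -y₀;
         y₀ * (y₀ + algebraMap K R a₁ * x₀ + algebraMap K R a₃)
           - (x₀ ^ 2 + algebraMap K R a₂ * x₀ + algebraMap K R a₄) * (x₀ + algebraMap K R a₂),
           -(x₀ ^ 2 + algebraMap K R a₂ * x₀ + algebraMap K R a₄), x₀ * y₀;
         -(algebraMap K R a₂ * (y₀ + algebraMap K R a₁ * x₀ + algebraMap K R a₃)),
           -(y₀ + algebraMap K R a₁ * x₀ + algebraMap K R a₃), x₀ ^ 2] := by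
  rw [weierstrassX, Matrix.mul_fin_three]
  congr! 2 <;> ring_nf

theorem weierstrassX_mul_weierstrassY :
    weierstrassX a₁ a₂ a₃ a₄ x₀ y₀ * weierstrassY R a₁ =
      !![algebraMap K R a₁, 0, 1; y₀, 0, 0; x₀, 0, 0] := by
  rw [weierstrassX, weierstrassY, Matrix.mul_fin_three]
  congr! 2 <;> ring_nf

theorem weierstrassY_mul_weierstrassX :
    weierstrassY R a₁ * weierstrassX a₁ a₂ a₃ a₄ x₀ y₀ =
      !![0, 0, 0;
         algebraMap K R a₁ * algebraMap K R a₂ - y₀ - algebraMap K R a₃, algebraMap K R a₁, -x₀;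
         -x₀ - algebraMap K R a₂, -1, 0] := by
  rw [weierstrassX, weierstrassY, Matrix.mul_fin_three]
  congr! 2 <;> ring_nf

theorem weierstrassY_mul_self :
    weierstrassY R a₁ * weierstrassY R a₁ = !![0, 0, 0; -1, 0, 0; 0, 0, 0] := by
  rw [weierstrassY, Matrix.mul_fin_three]
  congr! 2 <;> ring_nf

theorem weierstrassX_relation
    (hF : y₀ ^ 2 + algebraMap K R a₁ * x₀ * y₀ + algebraMap K R a₃ * y₀ =
      x₀ ^ 3 + algebraMap K R a₂ * x₀ ^ 2 + algebraMap K R a₄ * x₀ + algebraMap K R a₆) :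
    let X := weierstrassX a₁ a₂ a₃ a₄ x₀ y₀
    X ^ 3 + a₂ • X ^ 2 + a₄ • X + a₆ • 1 = 0 := by
  intro X
  rw [pow_succ X 2, pow_two, weierstrassX_mul_self]
  simp only [X, weierstrassX, Matrix.mul_fin_three]
  ext i j
  fin_cases i <;> fin_cases j <;> simp <;> simp only [Algebra.smul_def] <;>
    first | ring1 | linear_combination hF | linear_combination -hF

theorem weierstrass_cubic_relation_xxy :
    let X := weierstrassX a₁ a₂ a₃ a₄ x₀ y₀
    let Y := weierstrassY R a₁
    X ^ 2 * Y + X * Y * X + Y * X ^ 2 + a₂ • (X * Y + Y * X) - a₁ • X + a₄ • Y - a₃ • 1 = 0 := by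
  intro X Y
  rw [pow_two, weierstrassX_mul_self, weierstrassX_mul_weierstrassY, weierstrassY_mul_weierstrassX]
  simp only [X, Y, weierstrassX, weierstrassY, Matrix.mul_fin_three]
  ext i j
  fin_cases i <;> fin_cases j <;> simp <;> simp only [Algebra.smul_def] <;> ring

theorem weierstrass_cubic_relation_xyy :
    let X := weierstrassX a₁ a₂ a₃ a₄ x₀ y₀
    let Y := weierstrassY R a₁
    X * Y ^ 2 + Y * X * Y + Y ^ 2 * X + a₂ • Y ^ 2 - a₁ • Y = 1 := by
  intro X Y
  rw [pow_two, weierstrassY_mul_self, weierstrassY_mul_weierstrassX]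
  simp only [X, Y, weierstrassX, weierstrassY, Matrix.mul_fin_three]
  ext i j
  fin_cases i <;> fin_cases j <;> simp <;> simp only [Algebra.smul_def] <;> ring

theorem weierstrassY_relation : weierstrassY R a₁ ^ 3 = 0 := by
  rw [pow_succ, pow_two, weierstrassY_mul_self, weierstrassY, Matrix.mul_fin_three]
  ext i j
  fin_cases i <;> fin_cases j <;> simp

theorem weierstrass_xi :
    let X := weierstrassX a₁ a₂ a₃ a₄ x₀ y₀
    let Y := weierstrassY R a₁
    X * Y * (X * Y) - Y * Y * (X * X + a₂ • X + a₄ • 1) - a₁ • (X * Y)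
      = !![x₀, 0, 0; 0, x₀, 0; 0, 0, x₀] := by
  intro X Y
  rw [mul_add, mul_add, mul_smul_comm, mul_smul_comm, mul_one, weierstrassX_mul_weierstrassY,
    weierstrassY_mul_self, weierstrassX_mul_self]
  simp only [X, weierstrassX, Matrix.mul_fin_three]
  ext i j
  fin_cases i <;> fin_cases j <;> simp <;> simp only [Algebra.smul_def] <;> ring

theorem weierstrass_deriv_x :
    let X := weierstrassX a₁ a₂ a₃ a₄ x₀ y₀
    let Y := weierstrassY R a₁
    X * (X * Y) - X * Y * X =
      !![-2 * y₀ - algebraMap K R a₁ * x₀ - algebraMap K R a₃, algebraMap K R a₁,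
           -2 * x₀ - algebraMap K R a₂;
         algebraMap K R a₁ * (x₀ ^ 2 + algebraMap K R a₂ * x₀ + algebraMap K R a₄)
           + 2 * x₀ * y₀ + algebraMap K R a₂ * y₀, y₀,
           x₀ ^ 2 + algebraMap K R a₂ * x₀ + algebraMap K R a₄;
         algebraMap K R a₁ * (y₀ + algebraMap K R a₁ * x₀ + algebraMap K R a₃)
           + 2 * x₀ ^ 2 + algebraMap K R a₂ * x₀, x₀,
           y₀ + algebraMap K R a₁ * x₀ + algebraMap K R a₃] := by
  intro X Y
  rw [weierstrassX_mul_weierstrassY]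
  simp only [X, weierstrassX, Matrix.mul_fin_three]
  ext i j
  fin_cases i <;> fin_cases j <;> simp <;> ring

theorem weierstrass_deriv_y :
    let X := weierstrassX a₁ a₂ a₃ a₄ x₀ y₀
    let Y := weierstrassY R a₁
    Y * X * Y - Y * (Y * X) =
      !![0, 0, 0;
         -algebraMap K R a₁ ^ 2 - 2 * x₀ - algebraMap K R a₂, -1, -algebraMap K R a₁;
         algebraMap K R a₁, 0, 1] := by
  intro X Y
  rw [weierstrassY_mul_weierstrassX]
  simp only [Y, weierstrassY, Matrix.mul_fin_three]
  ext i j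
  fin_cases i <;> fin_cases j <;> simp <;> ring

theorem weierstrass_deriv_xi {DX DY : Matrix (Fin 3) (Fin 3) R} :
    let X := weierstrassX a₁ a₂ a₃ a₄ x₀ y₀
    let Y := weierstrassY R a₁
    DX = X * (X * Y) - X * Y * X → DY = Y * X * Y - Y * (Y * X) →
    (DX * Y + X * DY) * (X * Y) + X * Y * (DX * Y + X * DY)
      - ((DY * Y + Y * DY) * (X * X + a₂ • X + a₄ • 1)
        + Y * Y * (DX * X + X * DX + a₂ • DX)) - a₁ • (DX * Y + X * DY)
      = (2 : K) • !![y₀, 0, 0; 0, y₀, 0; 0, 0, y₀]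
        + a₁ • !![x₀, 0, 0; 0, x₀, 0; 0, 0, x₀] + a₃ • 1 := by
  intro X Y hDX hDY
  rw [weierstrass_deriv_x] at hDX
  rw [weierstrass_deriv_y] at hDY
  have hT : DX * Y + X * DY =
      !![0, 1, 0; x₀ ^ 2 + algebraMap K R a₂ * x₀ + algebraMap K R a₄, 0, 0;
         y₀ + algebraMap K R a₁ * x₀ + algebraMap K R a₃, 0, 0] := by
    rw [hDX, hDY]
    simp only [X, Y, weierstrassX, weierstrassY, Matrix.mul_fin_three]
    ext i j
    fin_cases i <;> fin_cases j <;> simp <;> ring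
  have hU : DY * Y + Y * DY = !![0, 0, 0; -algebraMap K R a₁, 0, 0; 1, 0, 0] := by
    rw [hDY]
    simp only [Y, weierstrassY, Matrix.mul_fin_three]
    ext i j
    fin_cases i <;> fin_cases j <;> simp
  rw [hT, hU, mul_add, mul_add, mul_add, mul_add, mul_smul_comm, mul_smul_comm, mul_smul_comm,
    mul_one, weierstrassX_mul_weierstrassY, weierstrassY_mul_self, weierstrassX_mul_self, hDX]
  simp only [X, weierstrassX, Matrix.mul_fin_three]
  ext i j
  fin_cases i <;> fin_cases j <;> simp <;> simp only [Algebra.smul_def, map_ofNat] <;> ring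

theorem weierstrass_generate (hR : Algebra.adjoin K {x₀, y₀} = ⊤)
    {S : Subalgebra K (Matrix (Fin 3) (Fin 3) R)}
    (hX : weierstrassX a₁ a₂ a₃ a₄ x₀ y₀ ∈ S) (hY : weierstrassY R a₁ ∈ S) : S = ⊤ := by
  set X := weierstrassX a₁ a₂ a₃ a₄ x₀ y₀ with hXdef
  set Y := weierstrassY R a₁ with hYdef
  have hYY : Y ^ 2 = !![0, 0, 0; -1, 0, 0; 0, 0, 0] := (pow_two Y).trans weierstrassY_mul_self
  have hXYY : X * Y ^ 2 = !![1, 0, 0; 0, 0, 0; 0, 0, 0] := by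
    rw [hYY, hXdef, weierstrassX, Matrix.mul_fin_three]
    congr! 2 <;> ring_nf
  have hcol (i : Fin 3) : Matrix.single i 0 1 ∈ S := by
    have : (Matrix.single i 0 1 : Matrix (Fin 3) (Fin 3) R) =
        ![X * Y ^ 2, -Y ^ 2, Y * (X * Y ^ 2) - a₁ • Y ^ 2] i := by
      rw [hXYY, hYY, hYdef, weierstrassY, Matrix.mul_fin_three]
      ext k l
      fin_cases i <;> fin_cases k <;> fin_cases l <;> simp [Algebra.algebraMap_eq_smul_one]
    rw [this]
    fin_cases i
    · exact mul_mem hX (pow_mem hY 2)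
    · exact neg_mem (pow_mem hY 2)
    · exact sub_mem (mul_mem hY (mul_mem hX (pow_mem hY 2))) (S.smul_mem (pow_mem hY 2) _)
  have hrow (j : Fin 3) : Matrix.single 0 j 1 ∈ S := by
    have : (Matrix.single 0 j 1 : Matrix (Fin 3) (Fin 3) R) =
        ![X * Y ^ 2, X * Y ^ 2 * X * (X * Y ^ 2) - X * Y ^ 2 * X,
          X * Y - X * Y * (X * Y ^ 2)] j := by
      rw [hXYY, hXdef, hYdef, weierstrassX_mul_weierstrassY, weierstrassX]
      simp only [Matrix.mul_fin_three]
      ext k l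
      fin_cases j <;> fin_cases k <;> fin_cases l <;> simp
    have h := mul_mem hX (pow_mem hY 2)
    rw [this]
    fin_cases j
    · exact h
    · exact sub_mem (mul_mem (mul_mem h hX) h) (mul_mem h hX)
    · exact sub_mem (mul_mem hX hY) (mul_mem (mul_mem hX hY) h)
  have hunit (i j : Fin 3) : Matrix.single i j 1 ∈ S := by
    simpa using mul_mem (hcol i) (hrow j)
  have hscalar (r : R) : Matrix.diagonal (fun _ => r) ∈ S := by
    have hentry (i j : Fin 3) : Matrix.diagonal (fun _ => X i j) ∈ S := by
      have : (Matrix.diagonal fun _ => X i j) =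
          ∑ k, Matrix.single k i 1 * X * Matrix.single j k (1 : R) := by
        simp [Matrix.single_mul_mul_single, Matrix.sum_single_eq_diagonal]
      rw [this]
      exact sum_mem fun k _ => mul_mem (mul_mem (hunit _ _) hX) (hunit _ _)
    have hle : Algebra.adjoin K {x₀, y₀} ≤ S.comap (Matrix.diagonalAlgHom K |>.comp
        (Pi.constAlgHom K (Fin 3) R)) := by
      refine Algebra.adjoin_le ?_
      rintro _ (rfl | rfl)
      · exact hentry 2 2
      · exact hentry 1 2
    rw [hR] at hle
    exact hle (Algebra.mem_top (x := r))
  rw [eq_top_iff]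
  intro M _
  rw [Matrix.matrix_eq_sum_single M]
  refine sum_mem fun i _ => sum_mem fun j _ => ?_
  have h := mul_mem (hscalar (M i j)) (hunit i j)
  rwa [← Matrix.smul_eq_diagonal_mul, Matrix.smul_single, smul_eq_mul, mul_one] at h

end WeierstrassMatrices


theorem weierstrass_algHom_injective {K A : Type*} [CommRing K] [Ring A] [Algebra K A]
    {a₁ a₂ a₃ a₄ a₆ : K} {x y : A} (hgen : Algebra.adjoin K {x, y} = ⊤)
    (h1 : x ^ 3 + a₂ • x ^ 2 + a₄ • x + a₆ • 1 = 0)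
    (h2 : x ^ 2 * y + x * y * x + y * x ^ 2 + a₂ • (x * y + y * x) - a₁ • x + a₄ • y - a₃ • 1 = 0)
    (h3 : x * y ^ 2 + y * x * y + y ^ 2 * x + a₂ • y ^ 2 - a₁ • y = 1) (h4 : y ^ 3 = 0)
    {F : MvPolynomial (Fin 2) K}
    (hF : F = .X 1 ^ 2 + .C a₁ * .X 0 * .X 1 + .C a₃ * .X 1
        - (.X 0 ^ 3 + .C a₂ * .X 0 ^ 2 + .C a₄ * .X 0 + .C a₆))
    (θ : A →ₐ[K] Matrix (Fin 3) (Fin 3) (MvPolynomial (Fin 2) K ⧸ Ideal.span {F}))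
    (hθx : θ x = weierstrassX a₁ a₂ a₃ a₄ (Ideal.Quotient.mk _ (.X 0)) (Ideal.Quotient.mk _ (.X 1)))
    (hθy : θ y = weierstrassY _ a₁) : Function.Injective θ := by
  obtain ⟨e, he, ρ, t, p, q, r, s, hρ, hρx, hρy⟩ := exists_injective_matrix_rep h3 h4
  obtain ⟨rfl, rfl, rfl, hc, hFsq⟩ := matrix_entries_of_relations (a₁ := a₁) (a₂ := a₂) (a₃ := a₃)
    (a₄ := a₄) (a₆ := a₆) hρx hρy (by simpa using congrArg ρ h1) (by
      simpa only [map_sub, map_add, map_mul, map_smul, map_pow, map_one, map_zero]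
        using congrArg ρ h2)
  obtain ⟨φ, hφs, hφq⟩ := exists_algHom_of_weierstrass hc hFsq hF
  have hcomp : φ.mapMatrix.comp θ = ρ := by
    refine AlgHom.ext_of_adjoin_eq_top hgen ?_
    rintro _ (rfl | rfl)
    · rw [AlgHom.comp_apply, hθx, hρx]
      ext i j : 1
      fin_cases i <;> fin_cases j <;>
        simp [weierstrassX, hφs, hφq, Algebra.algebraMap_eq_smul_one]
      abel
    · rw [AlgHom.comp_apply, hθy, hρy]
      ext i j : 1
      fin_cases i <;> fin_cases j <;> simp [weierstrassY]
  rw [← hcomp, AlgHom.coe_comp] at hρ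
  exact Function.Injective.of_comp hρ

theorem adjoin_quotient_mk_X_eq_top {K : Type*} [CommRing K] (I : Ideal (MvPolynomial (Fin 2) K)) :
    Algebra.adjoin K {Ideal.Quotient.mk I (.X 0), Ideal.Quotient.mk I (.X 1)} = ⊤ := by
  have h := congrArg (Subalgebra.map (Ideal.Quotient.mkₐ K I))
    (MvPolynomial.adjoin_range_X (R := K) (σ := Fin 2))
  rw [Algebra.map_top, (AlgHom.range_eq_top _).mpr (Ideal.Quotient.mkₐ_surjective K I),
    AlgHom.map_adjoin, ← Set.range_comp] at h
  rw [← h]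
  congr 1
  ext z
  simp [Fin.exists_fin_two, eq_comm]

section TernaryCubicAlgebra

variable {K : Type*} [Field K] {A B C A2 A3 B1 B3 C1 C2 M : K}

theorem tcAlg_adjoin_eq_top :
    Algebra.adjoin K {tcX K A B C A2 A3 B1 B3 C1 C2 M, tcY K A B C A2 A3 B1 B3 C1 C2 M} = ⊤ := by
  let π : FreeAlgebra K (Fin 2) →ₐ[K] TCAlg K A B C A2 A3 B1 B3 C1 C2 M :=
    RingQuot.mkAlgHom K (tcRel K A B C A2 A3 B1 B3 C1 C2 M)
  have h := congrArg (Subalgebra.map π) (FreeAlgebra.adjoin_range_ι K (Fin 2))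
  rw [Algebra.map_top, (AlgHom.range_eq_top π).mpr (RingQuot.mkAlgHom_surjective K _),
    AlgHom.map_adjoin, ← Set.range_comp] at h
  rw [← h]
  congr 1
  ext z
  rw [Set.mem_range, Fin.exists_fin_two, eq_comm, @eq_comm _ _ z]
  rfl

theorem tcRel_relations {a₁ a₂ a₃ a₄ a₆ : K} :
    let x := tcX K (-a₆) 0 (-1) a₃ (-a₄) 1 0 (-a₂) 0 a₁
    let y := tcY K (-a₆) 0 (-1) a₃ (-a₄) 1 0 (-a₂) 0 a₁
    x ^ 3 + a₂ • x ^ 2 + a₄ • x + a₆ • 1 = 0 ∧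
    x ^ 2 * y + x * y * x + y * x ^ 2 + a₂ • (x * y + y * x) - a₁ • x + a₄ • y - a₃ • 1 = 0 ∧
    x * y ^ 2 + y * x * y + y ^ 2 * x + a₂ • y ^ 2 - a₁ • y = 1 ∧ y ^ 3 = 0 := by
  intro x y
  let π : FreeAlgebra K (Fin 2) →ₐ[K] TCAlg K (-a₆) 0 (-1) a₃ (-a₄) 1 0 (-a₂) 0 a₁ :=
    RingQuot.mkAlgHom K (tcRel K (-a₆) 0 (-1) a₃ (-a₄) 1 0 (-a₂) 0 a₁)
  have hx : π (FreeAlgebra.ι K 0) = x := rfl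
  have hy : π (FreeAlgebra.ι K 1) = y := rfl
  have key (u) (h : tcRel K (-a₆) 0 (-1) a₃ (-a₄) 1 0 (-a₂) 0 a₁ u 0) : π u = 0 :=
    (RingQuot.mkAlgHom_rel K h).trans (map_zero π)
  have h1 := key _ ⟨rfl, Or.inl rfl⟩
  have h2 := key _ ⟨rfl, Or.inr (Or.inl rfl)⟩
  have h3 := key _ ⟨rfl, Or.inr (Or.inr (Or.inl rfl))⟩
  have h4 := key _ ⟨rfl, Or.inr (Or.inr (Or.inr rfl))⟩
  simp only [map_add, map_mul, map_pow, hx, hy, AlgHom.commutes] at h1 h2 h3 h4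
  simp only [Algebra.algebraMap_eq_smul_one, smul_mul_assoc, one_mul] at h1 h2 h3 h4
  refine ⟨?_, ?_, ?_, ?_⟩
  · linear_combination (norm := module) -h1
  · linear_combination (norm := module) -h2
  · linear_combination (norm := module) -h3
  · linear_combination (norm := module) -h4

theorem exists_tcAlg_algHom {S : Type*} [Ring S] [Algebra K S] {a₁ a₂ a₃ a₄ a₆ : K} {X Y : S}
    (h1 : X ^ 3 + a₂ • X ^ 2 + a₄ • X + a₆ • 1 = 0)
    (h2 : X ^ 2 * Y + X * Y * X + Y * X ^ 2 + a₂ • (X * Y + Y * X) - a₁ • X + a₄ • Y - a₃ • 1 = 0)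
    (h3 : X * Y ^ 2 + Y * X * Y + Y ^ 2 * X + a₂ • Y ^ 2 - a₁ • Y = 1) (h4 : Y ^ 3 = 0) :
    ∃ θ : TCAlg K (-a₆) 0 (-1) a₃ (-a₄) 1 0 (-a₂) 0 a₁ →ₐ[K] S,
      θ (tcX K (-a₆) 0 (-1) a₃ (-a₄) 1 0 (-a₂) 0 a₁) = X ∧
      θ (tcY K (-a₆) 0 (-1) a₃ (-a₄) 1 0 (-a₂) 0 a₁) = Y := by
  let g : FreeAlgebra K (Fin 2) →ₐ[K] S := FreeAlgebra.lift K ![X, Y]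
  have hgx : g (FreeAlgebra.ι K 0) = X := by simp [g]
  have hgy : g (FreeAlgebra.ι K 1) = Y := by simp [g]
  have hg : ∀ ⦃u v⦄, tcRel K (-a₆) 0 (-1) a₃ (-a₄) 1 0 (-a₂) 0 a₁ u v → g u = g v := by
    rintro u v ⟨rfl, rfl | rfl | rfl | rfl⟩ <;>
      simp only [map_add, map_mul, map_pow, map_zero, hgx, hgy, AlgHom.commutes] <;>
      simp only [Algebra.algebraMap_eq_smul_one, smul_mul_assoc, one_mul, zero_mul]
    · linear_combination (norm := module) -h1
    · linear_combination (norm := module) -h2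
    · linear_combination (norm := module) -h3
    · linear_combination (norm := module) -h4
  refine ⟨RingQuot.liftAlgHom K ⟨g, hg⟩, ?_, ?_⟩
  · exact (RingQuot.liftAlgHom_mkAlgHom_apply K g hg _).trans hgx
  · exact (RingQuot.liftAlgHom_mkAlgHom_apply K g hg _).trans hgy

theorem tcXi_weierstrass {a₁ a₂ a₃ a₄ a₆ : K} :
    let x := tcX K (-a₆) 0 (-1) a₃ (-a₄) 1 0 (-a₂) 0 a₁
    let y := tcY K (-a₆) 0 (-1) a₃ (-a₄) 1 0 (-a₂) 0 a₁
    tcXi K (-a₆) 0 (-1) a₃ (-a₄) 1 0 (-a₂) 0 a₁ =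
      x * y * (x * y) - y * y * (x * x + a₂ • x + a₄ • 1) - a₁ • (x * y) := by
  intro x y
  simp only [tcXi, Algebra.algebraMap_eq_smul_one, smul_mul_assoc, one_mul, pow_two, mul_add,
    mul_smul_comm, mul_one, add_mul, smul_add]
  module

end TernaryCubicAlgebra

set_option maxHeartbeats 1000000 in
set_option synthInstance.maxHeartbeats 400000 in
open MvPolynomial in
/-- Let `F(x,y) = y² + a₁xy + a₃y − (x³+a₂x²+a₄x+a₆)` and let `f(x,y,z) = x³F(z/x, y/x)`
be the associated ternary cubic, i.e. the ternary cubic with coefficient vector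
`(A,B,C,A₂,A₃,B₁,B₃,C₁,C₂,M) = (−a₆, 0, −1, a₃, −a₄, 1, 0, −a₂, 0, a₁)`.  There is a
`K`-algebra isomorphism `θ : A_f → Mat₃(K[x,y]/(F))` given by the displayed matrices,
with `θ(ξ) = x₀I₃` and `θ(η) = y₀I₃` (where `η = ½(Dξ − a₁ξ − a₃)` for the derivation `D`
with `Dx = C[xy,x]`, `Dy = C[y,yx]`). -/
theorem tc_iso_matrix (K : Type*) [Field K] (h2 : (2 : K) ≠ 0) (h3 : (3 : K) ≠ 0)
    (a₁ a₂ a₃ a₄ a₆ : K) :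
    letI F : MvPolynomial (Fin 2) K :=
      (X 1) ^ 2 + C a₁ * (X 0) * (X 1) + C a₃ * (X 1)
        - ((X 0) ^ 3 + C a₂ * (X 0) ^ 2 + C a₄ * (X 0) + C a₆)
    letI R := MvPolynomial (Fin 2) K ⧸ Ideal.span {F}
    letI x₀ : R := Ideal.Quotient.mk _ (X 0)
    letI y₀ : R := Ideal.Quotient.mk _ (X 1)
    letI α : K → R := algebraMap K _
    letI x := tcX K (-a₆) 0 (-1) a₃ (-a₄) 1 0 (-a₂) 0 a₁
    letI y := tcY K (-a₆) 0 (-1) a₃ (-a₄) 1 0 (-a₂) 0 a₁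
    letI ξ := tcXi K (-a₆) 0 (-1) a₃ (-a₄) 1 0 (-a₂) 0 a₁
    ∃ θ : TCAlg K (-a₆) 0 (-1) a₃ (-a₄) 1 0 (-a₂) 0 a₁ ≃ₐ[K] Matrix (Fin 3) (Fin 3) R,
      θ x = !![-x₀ - α a₂, -1, 0;
               x₀ ^ 2 + α a₂ * x₀ + α a₄, 0, y₀;
               y₀ + α a₁ * x₀ + α a₃, 0, x₀] ∧
      θ y = !![0, 0, 0; -(α a₁), 0, -1; 1, 0, 0] ∧
      θ ξ = !![x₀, 0, 0; 0, x₀, 0; 0, 0, x₀] ∧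
      ∀ D : TCAlg K (-a₆) 0 (-1) a₃ (-a₄) 1 0 (-a₂) 0 a₁ →ₗ[K]
            TCAlg K (-a₆) 0 (-1) a₃ (-a₄) 1 0 (-a₂) 0 a₁,
        (∀ u v, D (u * v) = D u * v + u * D v) →
        D x = algebraMap K _ (-1 : K) * ((x * y) * x - x * (x * y)) →
        D y = algebraMap K _ (-1 : K) * (y * (y * x) - (y * x) * y) →
        θ ((2 : K)⁻¹ • (D ξ - algebraMap K _ a₁ * ξ - algebraMap K _ a₃))
          = !![y₀, 0, 0; 0, y₀, 0; 0, 0, y₀] := by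
  generalize hFdef : (X 1 : MvPolynomial (Fin 2) K) ^ 2 + C a₁ * X 0 * X 1 + C a₃ * X 1
    - (X 0 ^ 3 + C a₂ * X 0 ^ 2 + C a₄ * X 0 + C a₆) = F
  set x₀ := Ideal.Quotient.mk (Ideal.span {F}) (X 0)
  set y₀ := Ideal.Quotient.mk (Ideal.span {F}) (X 1)
  set x := tcX K (-a₆) 0 (-1) a₃ (-a₄) 1 0 (-a₂) 0 a₁
  set y := tcY K (-a₆) 0 (-1) a₃ (-a₄) 1 0 (-a₂) 0 a₁
  set ξ := tcXi K (-a₆) 0 (-1) a₃ (-a₄) 1 0 (-a₂) 0 a₁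
  have hF : y₀ ^ 2 + algebraMap K _ a₁ * x₀ * y₀ + algebraMap K _ a₃ * y₀ =
      x₀ ^ 3 + algebraMap K _ a₂ * x₀ ^ 2 + algebraMap K _ a₄ * x₀ + algebraMap K _ a₆ := by
    have h : Ideal.Quotient.mk (Ideal.span {F}) F = 0 :=
      Ideal.Quotient.eq_zero_iff_mem.mpr (Ideal.mem_span_singleton_self F)
    refine sub_eq_zero.mp (Eq.trans ?_ h)
    conv_rhs => arg 2; rw [← hFdef]
    rfl
  obtain ⟨θ, hθx, hθy⟩ := exists_tcAlg_algHom (weierstrassX_relation hF)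
    weierstrass_cubic_relation_xxy weierstrass_cubic_relation_xyy weierstrassY_relation
  obtain ⟨hr1, hr2, hr3, hr4⟩ := tcRel_relations (a₁ := a₁) (a₂ := a₂) (a₃ := a₃) (a₄ := a₄)
    (a₆ := a₆)
  have hinj : Function.Injective θ :=
    weierstrass_algHom_injective tcAlg_adjoin_eq_top hr1 hr2 hr3 hr4 hFdef.symm θ hθx hθy
  have hsurj : Function.Surjective θ := (AlgHom.range_eq_top θ).mp <|
    weierstrass_generate (adjoin_quotient_mk_X_eq_top _) ⟨x, hθx⟩ ⟨y, hθy⟩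
  have hξ : ξ = x * y * (x * y) - y * y * (x * x + a₂ • x + a₄ • 1) - a₁ • (x * y) :=
    tcXi_weierstrass
  have hθξ : θ ξ = !![x₀, 0, 0; 0, x₀, 0; 0, 0, x₀] := by
    rw [hξ]
    simp only [map_sub, map_add, map_mul, map_smul, map_one]
    rw [hθx, hθy]
    exact weierstrass_xi
  refine ⟨AlgEquiv.ofBijective θ ⟨hinj, hsurj⟩, hθx, hθy, hθξ, fun D hD hDx hDy => ?_⟩
  have hD1 : D 1 = 0 := by simpa using hD 1 1
  have hDX : θ (D x) = θ x * (θ x * θ y) - θ x * θ y * θ x := by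
    rw [hDx]
    simp
  have hDY : θ (D y) = θ y * θ x * θ y - θ y * (θ y * θ x) := by
    rw [hDy]
    simp
  have hθD : θ (D ξ) = (2 : K) • !![y₀, 0, 0; 0, y₀, 0; 0, 0, y₀]
      + a₁ • !![x₀, 0, 0; 0, x₀, 0; 0, 0, x₀] + a₃ • 1 := by
    rw [hθx, hθy] at hDX hDY
    rw [← weierstrass_deriv_xi hDX hDY, hξ]
    simp only [map_sub, map_add, map_mul, map_smul, map_one, hD, hD1, smul_zero, add_zero]
    rw [hθx, hθy]
  change θ _ = _
  rw [map_smul, map_sub, map_sub, map_mul, AlgHom.commutes,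
    AlgHom.commutes, ← Algebra.smul_def, Algebra.algebraMap_eq_smul_one, hθD, hθξ,
    add_sub_right_comm, add_sub_cancel_right, add_sub_cancel_right, inv_smul_smul₀ h2]
end

section
/- Let f' = ax⁴+bx³z+cx²z²+dxz³+ez⁴ be a binary quartic and let f = (f₁,f₂) with f₁ = x₁²−x₃x₄ and f₂ = x₂² − (ax₃² + bx₁x₃ + cx₃x₄ + dx₁x₄ + ex₄²). Then there is a K-algebra isomorphism θ : A_f → Mat₂(A_{f'}) given by p ↦ E₁₂, q ↦ r'I₂ + s'E₁₂, r ↦ E₂₁, s ↦ t'I₂ + s'E₂₁, where r',s',t' are the generators of A_{f'}. -/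
/-- The relations defining the algebra `A_f` associated to the binary quartic
`f = a x⁴ + b x³ z + c x² z² + d x z³ + e z⁴`: the quotient of the free algebra on
generators `r = ι 0`, `s = ι 1`, `t = ι 2` by the two-sided ideal generated by
`r²−a`, `rs+sr−b`, `rt+tr+s²−c`, `st+ts−d`, `t²−e`. -/
def bqRel (K : Type*) [Field K] (a b c d e : K) :
    FreeAlgebra K (Fin 3) → FreeAlgebra K (Fin 3) → Prop := fun x y =>
  y = 0 ∧ (
    x = FreeAlgebra.ι K 0 * FreeAlgebra.ι K 0 - algebraMap K _ a ∨
    x = FreeAlgebra.ι K 0 * FreeAlgebra.ι K 1 + FreeAlgebra.ι K 1 * FreeAlgebra.ι K 0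
        - algebraMap K _ b ∨
    x = FreeAlgebra.ι K 0 * FreeAlgebra.ι K 2 + FreeAlgebra.ι K 2 * FreeAlgebra.ι K 0
        + FreeAlgebra.ι K 1 * FreeAlgebra.ι K 1 - algebraMap K _ c ∨
    x = FreeAlgebra.ι K 1 * FreeAlgebra.ι K 2 + FreeAlgebra.ι K 2 * FreeAlgebra.ι K 1
        - algebraMap K _ d ∨
    x = FreeAlgebra.ι K 2 * FreeAlgebra.ι K 2 - algebraMap K _ e)

/-- The algebra `A_f` associated to a binary quartic. -/
def BQAlg (K : Type*) [Field K] (a b c d e : K) := RingQuot (bqRel K a b c d e)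

noncomputable instance (K : Type*) [Field K] (a b c d e : K) : Ring (BQAlg K a b c d e) :=
  inferInstanceAs (Ring (RingQuot _))

noncomputable instance (K : Type*) [Field K] (a b c d e : K) : Algebra K (BQAlg K a b c d e) :=
  inferInstanceAs (Algebra K (RingQuot _))

/-- The generator `r` of `A_f`. -/
noncomputable def bqR (K : Type*) [Field K] (a b c d e : K) : BQAlg K a b c d e :=
  RingQuot.mkAlgHom K (bqRel K a b c d e) (FreeAlgebra.ι K 0)

/-- The generator `s` of `A_f`. -/
noncomputable def bqS (K : Type*) [Field K] (a b c d e : K) : BQAlg K a b c d e :=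
  RingQuot.mkAlgHom K (bqRel K a b c d e) (FreeAlgebra.ι K 1)

/-- The generator `t` of `A_f`. -/
noncomputable def bqT (K : Type*) [Field K] (a b c d e : K) : BQAlg K a b c d e :=
  RingQuot.mkAlgHom K (bqRel K a b c d e) (FreeAlgebra.ι K 2)


section BinaryQuartic

variable {K : Type*} [Field K] {a b c d e : K} {B : Type*} [Ring B] [Algebra K B]

/-- The universal property of the algebra of a binary quartic. -/
theorem BQAlg.exists_algHom {x y z : B} (hxx : x * x = algebraMap K B a)
    (hxy : x * y + y * x = algebraMap K B b) (hxz : x * z + z * x + y * y = algebraMap K B c)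
    (hyz : y * z + z * y = algebraMap K B d) (hzz : z * z = algebraMap K B e) :
    ∃ φ : BQAlg K a b c d e →ₐ[K] B,
      φ (bqR K a b c d e) = x ∧ φ (bqS K a b c d e) = y ∧ φ (bqT K a b c d e) = z := by
  have hrel : ∀ ⦃u v⦄, bqRel K a b c d e u v →
      FreeAlgebra.lift K ![x, y, z] u = FreeAlgebra.lift K ![x, y, z] v := by
    rintro u v ⟨rfl, rfl | rfl | rfl | rfl | rfl⟩ <;> simp [*]
  refine ⟨RingQuot.liftAlgHom K ⟨FreeAlgebra.lift K ![x, y, z], hrel⟩, ?_, ?_, ?_⟩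
  · exact (RingQuot.liftAlgHom_mkAlgHom_apply _ _ _ _).trans (by simp)
  · exact (RingQuot.liftAlgHom_mkAlgHom_apply _ _ _ _).trans (by simp)
  · exact (RingQuot.liftAlgHom_mkAlgHom_apply _ _ _ _).trans (by simp)

theorem BQAlg.algHom_ext {φ ψ : BQAlg K a b c d e →ₐ[K] B}
    (hr : φ (bqR K a b c d e) = ψ (bqR K a b c d e))
    (hs : φ (bqS K a b c d e) = ψ (bqS K a b c d e))
    (ht : φ (bqT K a b c d e) = ψ (bqT K a b c d e)) : φ = ψ := by
  refine RingQuot.ringQuot_ext' (S := K) (s := bqRel K a b c d e) φ ψ (FreeAlgebra.hom_ext ?_)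
  funext i
  fin_cases i
  exacts [hr, hs, ht]

variable (K a b c d e) in
/-- The defining relations, satisfied by the generators. -/
theorem BQAlg.relations :
    bqR K a b c d e * bqR K a b c d e = algebraMap K _ a ∧
    bqR K a b c d e * bqS K a b c d e + bqS K a b c d e * bqR K a b c d e = algebraMap K _ b ∧
    bqR K a b c d e * bqT K a b c d e + bqT K a b c d e * bqR K a b c d e
      + bqS K a b c d e * bqS K a b c d e = algebraMap K _ c ∧
    bqS K a b c d e * bqT K a b c d e + bqT K a b c d e * bqS K a b c d e = algebraMap K _ d ∧
    bqT K a b c d e * bqT K a b c d e = algebraMap K _ e := by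
  let π : FreeAlgebra K (Fin 3) →ₐ[K] BQAlg K a b c d e := RingQuot.mkAlgHom K (bqRel K a b c d e)
  have key : ∀ u, bqRel K a b c d e u 0 → π u = 0 := fun u hu =>
    (RingQuot.mkAlgHom_rel K hu).trans (map_zero π)
  have h0 : π (FreeAlgebra.ι K 0) = bqR K a b c d e := rfl
  have h1 : π (FreeAlgebra.ι K 1) = bqS K a b c d e := rfl
  have h2 : π (FreeAlgebra.ι K 2) = bqT K a b c d e := rfl
  refine ⟨?_, ?_, ?_, ?_, ?_⟩ <;> rw [← sub_eq_zero]
  · simpa [h0, h1, h2] using key _ ⟨rfl, .inl rfl⟩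
  · simpa [h0, h1, h2] using key _ ⟨rfl, .inr (.inl rfl)⟩
  · simpa [h0, h1, h2] using key _ ⟨rfl, .inr (.inr (.inl rfl))⟩
  · simpa [h0, h1, h2] using key _ ⟨rfl, .inr (.inr (.inr (.inl rfl)))⟩
  · simpa [h0, h1, h2] using key _ ⟨rfl, .inr (.inr (.inr (.inr rfl)))⟩

/-- An element commuting with the images of the generators commutes with the whole image. -/
theorem BQAlg.mul_comm_algHom (φ : BQAlg K a b c d e →ₐ[K] B) {u : B}
    (hr : u * φ (bqR K a b c d e) = φ (bqR K a b c d e) * u)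
    (hs : u * φ (bqS K a b c d e) = φ (bqS K a b c d e) * u)
    (ht : u * φ (bqT K a b c d e) = φ (bqT K a b c d e) * u) (x : BQAlg K a b c d e) :
    u * φ x = φ x * u := by
  obtain ⟨x, rfl⟩ := RingQuot.mkAlgHom_surjective K (bqRel K a b c d e) x
  let π : FreeAlgebra K (Fin 3) →ₐ[K] BQAlg K a b c d e := RingQuot.mkAlgHom K (bqRel K a b c d e)
  change Commute u (φ (π x))
  induction x using FreeAlgebra.induction with
  | grade0 k => simpa using Algebra.commute_algebraMap_right k u
  | grade1 i =>
    fin_cases i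
    exacts [hr, hs, ht]
  | mul x y hx hy => simpa using hx.mul_right hy
  | add x y hx hy => simpa using hx.add_right hy

end BinaryQuartic

section QuadricIntersection

variable {K : Type*} [Field K] {B : Type*} [Ring B] [Algebra K B]

theorem QIAlg.algHom_ext {a b : Fin 10 → K} {φ ψ : QIAlg K a b →ₐ[K] B}
    (hp : φ (qiP K a b) = ψ (qiP K a b)) (hq : φ (qiQ K a b) = ψ (qiQ K a b))
    (hr : φ (qiR K a b) = ψ (qiR K a b)) (hs : φ (qiS K a b) = ψ (qiS K a b)) : φ = ψ := by
  refine RingQuot.ringQuot_ext' (S := K) (s := qiRel K a b) φ ψ (FreeAlgebra.hom_ext ?_)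
  funext i
  fin_cases i
  exacts [hp, hq, hr, hs]

/-- The relations of the quadric intersection algebra attached to the binary quartic with
coefficients `a, b, c, d, e`, for elements `p, q, r, s` of a `K`-algebra. -/
structure QuarticQIRelations (a b c d e : K) (p q r s : B) : Prop where
  p_mul_p : p * p = 0
  p_r_add : p * r + r * p = 1
  r_mul_r : r * r = 0
  q_mul_q : q * q = algebraMap K B b * p + algebraMap K B a
  q_s_add : q * s + s * q = algebraMap K B d * p + algebraMap K B b * r + algebraMap K B c
  s_mul_s : s * s = algebraMap K B d * r + algebraMap K B e
  p_comm_q : p * q = q * p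
  mixed : p * s + r * q = q * r + s * p
  r_comm_s : r * s = s * r

/-- The universal property of the quadric intersection algebra of a binary quartic. -/
theorem QuarticQIRelations.exists_algHom {a b c d e : K} {p q r s : B}
    (h : QuarticQIRelations a b c d e p q r s) :
    ∃ φ : QIAlg K ![1, 0, 0, 0, 0, 0, 0, 0, -1, 0] ![0, 0, -b, -d, 1, 0, 0, -a, -c, -e] →ₐ[K] B,
      φ (qiP K _ _) = p ∧ φ (qiQ K _ _) = q ∧ φ (qiR K _ _) = r ∧ φ (qiS K _ _) = s := by
  have hrel : ∀ ⦃u v⦄, qiRel K ![1, 0, 0, 0, 0, 0, 0, 0, -1, 0]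
      ![0, 0, -b, -d, 1, 0, 0, -a, -c, -e] u v →
      FreeAlgebra.lift K ![p, q, r, s] u = FreeAlgebra.lift K ![p, q, r, s] v := by
    rintro u v ⟨rfl, rfl | rfl | rfl | rfl | rfl | rfl | rfl | rfl | rfl⟩
    · simp [pow_two, h.p_mul_p]
    · simp [h.p_r_add]
    · simp [pow_two, h.r_mul_r]
    · simp [pow_two, h.q_mul_q]
    · simp [h.q_s_add]
      abel
    · simp [pow_two, h.s_mul_s]
    · simp [h.p_comm_q]
    · simp [h.mixed]
    · simp [h.r_comm_s]
  refine ⟨RingQuot.liftAlgHom K ⟨FreeAlgebra.lift K ![p, q, r, s], hrel⟩, ?_, ?_, ?_, ?_⟩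
  · exact (RingQuot.liftAlgHom_mkAlgHom_apply _ _ _ _).trans (by simp)
  · exact (RingQuot.liftAlgHom_mkAlgHom_apply _ _ _ _).trans (by simp)
  · exact (RingQuot.liftAlgHom_mkAlgHom_apply _ _ _ _).trans (by simp)
  · exact (RingQuot.liftAlgHom_mkAlgHom_apply _ _ _ _).trans (by simp)

/-- The generators of the quadric intersection algebra satisfy its relations. -/
theorem QIAlg.quarticQIRelations (a b c d e : K) :
    QuarticQIRelations a b c d e
      (qiP K ![1, 0, 0, 0, 0, 0, 0, 0, -1, 0] ![0, 0, -b, -d, 1, 0, 0, -a, -c, -e])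
      (qiQ K _ _) (qiR K _ _) (qiS K _ _) := by
  set qa : Fin 10 → K := ![1, 0, 0, 0, 0, 0, 0, 0, -1, 0] with hqa
  set qb : Fin 10 → K := ![0, 0, -b, -d, 1, 0, 0, -a, -c, -e] with hqb
  let π : FreeAlgebra K (Fin 4) →ₐ[K] QIAlg K qa qb := RingQuot.mkAlgHom K (qiRel K qa qb)
  have key : ∀ u, qiRel K qa qb u 0 → π u = 0 := fun u hu =>
    (RingQuot.mkAlgHom_rel K hu).trans (map_zero π)
  have h0 : π (FreeAlgebra.ι K 0) = qiP K qa qb := rfl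
  have h1 : π (FreeAlgebra.ι K 1) = qiQ K qa qb := rfl
  have h2 : π (FreeAlgebra.ι K 2) = qiR K qa qb := rfl
  have h3 : π (FreeAlgebra.ι K 3) = qiS K qa qb := rfl
  refine ⟨?_, ?_, ?_, ?_, ?_, ?_, ?_, ?_, ?_⟩ <;> rw [← sub_eq_zero]
  · have := key _ ⟨rfl, .inl rfl⟩
    simpa [h0, h1, h2, h3, hqa, hqb, pow_two] using this
  · have := key _ ⟨rfl, .inr (.inl rfl)⟩
    simpa [h0, h1, h2, h3, hqa, hqb, sub_eq_add_neg] using this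
  · have := key _ ⟨rfl, .inr (.inr (.inl rfl))⟩
    simpa [h0, h1, h2, h3, hqa, hqb, pow_two] using this
  · have := key _ ⟨rfl, .inr (.inr (.inr (.inl rfl)))⟩
    simp [h0, h1, hqb, pow_two] at this
    rw [← this]; abel
  · have := key _ ⟨rfl, .inr (.inr (.inr (.inr (.inl rfl))))⟩
    simp [h0, h1, h2, h3, hqb] at this
    rw [← this]; abel
  · have := key _ ⟨rfl, .inr (.inr (.inr (.inr (.inr (.inl rfl)))))⟩
    simp [h2, h3, hqb, pow_two] at this
    rw [← this]; abel
  · have := key _ ⟨rfl, .inr (.inr (.inr (.inr (.inr (.inr (.inl rfl))))))⟩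
    simpa [h0, h1, h2, h3] using this
  · have := key _ ⟨rfl, .inr (.inr (.inr (.inr (.inr (.inr (.inr (.inl rfl)))))))⟩
    simp [h0, h1, h2, h3] at this
    rw [← this]; abel
  · have := key _ ⟨rfl, .inr (.inr (.inr (.inr (.inr (.inr (.inr (.inr rfl)))))))⟩
    simpa [h0, h1, h2, h3] using this

/-- Matrix units `p = E₁₂`, `r = E₂₁` in `B` that commute with the image of `φ : A → B`
extend `φ` to `2 × 2` matrices over `A`. -/
theorem AlgHom.exists_matrix_two_extension {A : Type*} [Ring A] [Algebra K A] (φ : A →ₐ[K] B)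
    {p r : B} (hpp : p * p = 0) (hrr : r * r = 0) (hpr : p * r + r * p = 1)
    (hp : ∀ x, p * φ x = φ x * p) (hr : ∀ x, r * φ x = φ x * r) :
    ∃ ψ : Matrix (Fin 2) (Fin 2) A →ₐ[K] B, ∀ M,
      ψ M = φ (M 0 0) * (p * r) + φ (M 0 1) * p + φ (M 1 0) * r + φ (M 1 1) * (r * p) := by
  have hprp : p * (r * p) = p := by
    linear_combination (norm := noncomm_ring) p * hpr - hpp * r
  have hrpr : r * (p * r) = r := by
    linear_combination (norm := noncomm_ring) r * hpr - hrr * p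
  have hpp' : ∀ x, p * (p * x) = 0 := fun x => by rw [← mul_assoc, hpp, zero_mul]
  have hrr' : ∀ x, r * (r * x) = 0 := fun x => by rw [← mul_assoc, hrr, zero_mul]
  have hp' : ∀ x y, p * (φ x * y) = φ x * (p * y) := fun x y => by
    rw [← mul_assoc, hp, mul_assoc]
  have hr' : ∀ x y, r * (φ x * y) = φ x * (r * y) := fun x y => by
    rw [← mul_assoc, hr, mul_assoc]
  let L : Matrix (Fin 2) (Fin 2) A →ₗ[K] B :=
    { toFun := fun M =>
        φ (M 0 0) * (p * r) + φ (M 0 1) * p + φ (M 1 0) * r + φ (M 1 1) * (r * p)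
      map_add' := fun M N => by
        simp only [Matrix.add_apply, map_add, add_mul]; abel
      map_smul' := fun k M => by simp [smul_add] }
  have hL : ∀ M, L M =
      φ (M 0 0) * (p * r) + φ (M 0 1) * p + φ (M 1 0) * r + φ (M 1 1) * (r * p) := fun _ => rfl
  refine ⟨AlgHom.ofLinearMap L ?_ ?_, hL⟩
  · simp [hL, hpr]
  · intro M N
    simp only [hL, Matrix.mul_apply, Fin.sum_univ_two, map_add, map_mul, add_mul, mul_add,
      mul_assoc, hp', hr', hpp, hrr, hpp', hrr', hprp, hrpr, mul_zero, add_zero, zero_add]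
    abel

/-- An element commuting with `r` and killed by `p` on the right vanishes if `pr + rp = 1`. -/
theorem eq_zero_of_mul_eq_zero_of_matrix_units {p r x : B} (hpr : p * r + r * p = 1)
    (hr : r * x = x * r) (hx : x * p = 0) : x = 0 := by
  rw [← mul_one x, ← hpr, mul_add, ← mul_assoc, ← mul_assoc, hx, ← hr, mul_assoc, hx]; simp

/-- In an algebra satisfying the quadric intersection relations, `q = x + y p` and `s = z + y r`
where `x, y, z` commute with `p, r` and satisfy the relations of the binary quartic. -/
theorem QuarticQIRelations.exists_bq {a b c d e : K} {p q r s : B}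
    (h : QuarticQIRelations a b c d e p q r s) :
    ∃ x y z : B, q = x + y * p ∧ s = z + y * r ∧
      (p * x = x * p ∧ p * y = y * p ∧ p * z = z * p) ∧
      (r * x = x * r ∧ r * y = y * r ∧ r * z = z * r) ∧
      x * x = algebraMap K B a ∧ x * y + y * x = algebraMap K B b ∧
      x * z + z * x + y * y = algebraMap K B c ∧ y * z + z * y = algebraMap K B d ∧
      z * z = algebraMap K B e := by
  obtain ⟨hpp, hpr, hrr, hqq, hqs, hss, hpq, hmix, hrs⟩ := h
  have hrp : r * p + p * r = 1 := by rw [add_comm, hpr]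
  obtain ⟨w, hw⟩ : ∃ w, w = p * s - s * p := ⟨_, rfl⟩
  obtain ⟨m, hm⟩ : ∃ m, m = p * r - r * p := ⟨_, rfl⟩
  have hw' : w = q * r - r * q := by
    linear_combination (norm := noncomm_ring) hw + hmix
  have hprp : p * (r * p) = p := by
    linear_combination (norm := noncomm_ring) p * hpr - hpp * r
  have hrpr : r * (p * r) = r := by
    linear_combination (norm := noncomm_ring) r * hpr - hrr * p
  have hpm : p * m = -p := by
    linear_combination (norm := noncomm_ring) p * hm + hpp * r - hprp
  have hmp : m * p = p := by
    linear_combination (norm := noncomm_ring) hm * p + hprp - r * hpp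
  have hrm : r * m = r := by
    linear_combination (norm := noncomm_ring) r * hm + hrpr - hrr * p
  have hmr : m * r = -r := by
    linear_combination (norm := noncomm_ring) hm * r + p * hrr - hrpr
  have hmm : m * m = 1 := by
    linear_combination (norm := noncomm_ring) m * hm + hmp * r - hmr * p + hpr
  have hpw : p * w = -(w * p) := by
    linear_combination (norm := noncomm_ring) p * hw + hw * p + hpp * s - s * hpp
  have hrw : r * w = -(w * r) := by
    linear_combination (norm := noncomm_ring) r * hw' + hw' * r - hrr * q + q * hrr
  obtain ⟨y, hy⟩ : ∃ y, y = w * m := ⟨_, rfl⟩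
  have hym : y * m = w := by
    linear_combination (norm := noncomm_ring) hy * m + w * hmm
  have hpy : p * y = y * p := by
    linear_combination (norm := noncomm_ring) p * hy - hy * p + hpw * m - w * hpm - w * hmp
  have hry : r * y = y * r := by
    linear_combination (norm := noncomm_ring) r * hy - hy * r + hrw * m - w * hrm - w * hmr
  obtain ⟨x, rfl⟩ : ∃ x, q = x + y * p := ⟨q - y * p, by abel⟩
  obtain ⟨z, rfl⟩ : ∃ z, s = z + y * r := ⟨s - y * r, by abel⟩
  have hpx : p * x = x * p := by
    linear_combination (norm := noncomm_ring) hpq - hpy * p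
  have hrx : r * x = x * r := by
    linear_combination (norm := noncomm_ring) hw' - hry * p + hym - y * hm
  have hpz : p * z = z * p := by
    linear_combination (norm := noncomm_ring) -hw - hpy * r - hym + y * hm
  have hrz : r * z = z * r := by
    linear_combination (norm := noncomm_ring) hrs - hry * r
  have hq0 : x * x - algebraMap K B a + (x * y + y * x - algebraMap K B b) * p = 0 := by
    linear_combination (norm := noncomm_ring) hqq - y * hpx - y * hpy * p - y * y * hpp
  have hs0 : z * z - algebraMap K B e + (y * z + z * y - algebraMap K B d) * r = 0 := by
    linear_combination (norm := noncomm_ring) hss - y * hrz - y * hry * r - y * y * hrr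
  have hxx : x * x - algebraMap K B a = 0 := by
    refine eq_zero_of_mul_eq_zero_of_matrix_units hpr
      (((Commute.mul_right hrx hrx).sub_right
        (Algebra.commute_algebraMap_right a r)).eq) ?_
    linear_combination (norm := noncomm_ring) hq0 * p - (x * y + y * x - algebraMap K B b) * hpp
  have hxy : x * y + y * x - algebraMap K B b = 0 := by
    refine eq_zero_of_mul_eq_zero_of_matrix_units hpr
      ((((Commute.mul_right hrx hry).add_right
        (Commute.mul_right hry hrx)).sub_right
        (Algebra.commute_algebraMap_right b r)).eq) ?_
    linear_combination (norm := noncomm_ring) hq0 - hxx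
  have hzz : z * z - algebraMap K B e = 0 := by
    refine eq_zero_of_mul_eq_zero_of_matrix_units hrp
      (((Commute.mul_right hpz hpz).sub_right
        (Algebra.commute_algebraMap_right e p)).eq) ?_
    linear_combination (norm := noncomm_ring) hs0 * r - (y * z + z * y - algebraMap K B d) * hrr
  have hyz : y * z + z * y - algebraMap K B d = 0 := by
    refine eq_zero_of_mul_eq_zero_of_matrix_units hrp
      ((((Commute.mul_right hpy hpz).add_right
        (Commute.mul_right hpz hpy)).sub_right
        (Algebra.commute_algebraMap_right d p)).eq) ?_
    linear_combination (norm := noncomm_ring) hs0 - hzz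
  refine ⟨x, y, z, rfl, rfl, ⟨hpx, hpy, hpz⟩, ⟨hrx, hry, hrz⟩, sub_eq_zero.mp hxx,
    sub_eq_zero.mp hxy, ?_, sub_eq_zero.mp hyz, sub_eq_zero.mp hzz⟩
  linear_combination (norm := noncomm_ring) hqs - hxy * r - hyz * p - y * hpz - y * hrx -
    y * hpy * r - y * hry * p - y * y * hpr

end QuadricIntersection

/-- A `2 × 2` matrix commuting with the matrix units `E₁₂` and `E₂₁` is scalar. -/
theorem Matrix.eq_diag_of_commute_units_two {A : Type*} [Ring A] {M : Matrix (Fin 2) (Fin 2) A}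
    (hp : !![0, 1; 0, 0] * M = M * !![0, 1; 0, 0]) (hr : !![0, 0; 1, 0] * M = M * !![0, 0; 1, 0]) :
    M = !![M 0 0, 0; 0, M 0 0] := by
  have h1 := congr_fun₂ hp 0 0
  have h2 := congr_fun₂ hp 0 1
  have h3 := congr_fun₂ hr 0 0
  simp [Matrix.mul_apply] at h1 h2 h3
  ext i j
  fin_cases i <;> fin_cases j <;> simp [*]

set_option synthInstance.maxHeartbeats 400000 in
set_option maxHeartbeats 1000000 in
/-- Let `f' = ax⁴+bx³z+cx²z²+dxz³+ez⁴` be a binary quartic and let `f = (f₁,f₂)` with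
`f₁ = x₁²−x₃x₄` and `f₂ = x₂² − (ax₃² + bx₁x₃ + cx₃x₄ + dx₁x₄ + ex₄²)`.  Then there is a
`K`-algebra isomorphism `θ : A_f → Mat₂(A_{f'})` given by `p ↦ E₁₂`, `q ↦ r'I₂ + s'E₁₂`,
`r ↦ E₂₁`, `s ↦ t'I₂ + s'E₂₁`. -/
theorem qi_iso_mat2_bq (K : Type*) [Field K] (h2 : (2 : K) ≠ 0) (h3 : (3 : K) ≠ 0)
    (a b c d e : K) :
    letI qa : Fin 10 → K := ![1, 0, 0, 0, 0, 0, 0, 0, -1, 0]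
    letI qb : Fin 10 → K := ![0, 0, -b, -d, 1, 0, 0, -a, -c, -e]
    letI r' := bqR K a b c d e
    letI s' := bqS K a b c d e
    letI t' := bqT K a b c d e
    ∃ θ : QIAlg K qa qb ≃ₐ[K] Matrix (Fin 2) (Fin 2) (BQAlg K a b c d e),
      θ (qiP K qa qb) = !![0, 1; 0, 0] ∧
      θ (qiQ K qa qb) = !![r', s'; 0, r'] ∧
      θ (qiR K qa qb) = !![0, 0; 1, 0] ∧
      θ (qiS K qa qb) = !![t', 0; s', t'] := by
  obtain ⟨hrr, hrs, hrt, hst, htt⟩ := BQAlg.relations K a b c d e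
  have hmat : QuarticQIRelations a b c d e
      (!![0, 1; 0, 0] : Matrix (Fin 2) (Fin 2) (BQAlg K a b c d e))
      !![bqR K a b c d e, bqS K a b c d e; 0, bqR K a b c d e] !![0, 0; 1, 0]
      !![bqT K a b c d e, 0; bqS K a b c d e, bqT K a b c d e] := by
    constructor <;> ext i j <;> fin_cases i <;> fin_cases j <;>
      simp [Matrix.mul_apply, Matrix.algebraMap_matrix_apply, *]
    all_goals rw [← hrt]; abel
  obtain ⟨θ, hθp, hθq, hθr, hθs⟩ := hmat.exists_algHom
  have hgen := QIAlg.quarticQIRelations a b c d e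
  obtain ⟨x, y, z, hq, hs, ⟨hpx, hpy, hpz⟩, ⟨hrx, hry, hrz⟩, hxx, hxy, hxz, hyz, hzz⟩ :=
    hgen.exists_bq
  obtain ⟨φ, hφr, hφs, hφt⟩ := BQAlg.exists_algHom hxx hxy hxz hyz hzz
  obtain ⟨ψ, hψ⟩ := φ.exists_matrix_two_extension hgen.p_mul_p hgen.r_mul_r hgen.p_r_add
    (BQAlg.mul_comm_algHom φ (by rwa [hφr]) (by rwa [hφs]) (by rwa [hφt]))
    (BQAlg.mul_comm_algHom φ (by rwa [hφr]) (by rwa [hφs]) (by rwa [hφt]))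
  have hθdiag : ∀ u, qiP K _ _ * u = u * qiP K _ _ → qiR K _ _ * u = u * qiR K _ _ →
      θ u = !![θ u 0 0, 0; 0, θ u 0 0] := fun u hp hr =>
    Matrix.eq_diag_of_commute_units_two (by rw [← hθp, ← map_mul, hp, map_mul])
      (by rw [← hθr, ← map_mul, hr, map_mul])
  have hθx := hθdiag x hpx hrx
  have hθy := hθdiag y hpy hry
  have hθz := hθdiag z hpz hrz
  have hxy0 := hθq
  have hyz0 := hθs
  rw [hq, map_add, map_mul, hθp, hθx, hθy] at hxy0
  rw [hs, map_add, map_mul, hθr, hθz, hθy] at hyz0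
  have hx0 := congr_fun₂ hxy0 0 0
  have hy0 := congr_fun₂ hxy0 0 1
  have hz0 := congr_fun₂ hyz0 0 0
  simp at hx0 hy0 hz0
  have hθφ : θ.comp φ = Matrix.scalarAlgHom (Fin 2) K := by
    apply BQAlg.algHom_ext
    · rw [AlgHom.comp_apply, hφr, hθx, hx0]
      ext i j
      fin_cases i <;> fin_cases j <;> simp
    · rw [AlgHom.comp_apply, hφs, hθy, hy0]
      ext i j
      fin_cases i <;> fin_cases j <;> simp
    · rw [AlgHom.comp_apply, hφt, hθz, hz0]
      ext i j
      fin_cases i <;> fin_cases j <;> simp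
  have hθψ : θ.comp ψ = AlgHom.id K _ := by
    ext1 M
    have hφM : ∀ u, θ (φ u) = Matrix.scalarAlgHom (Fin 2) K u := fun u => DFunLike.congr_fun hθφ u
    simp only [AlgHom.comp_apply, hψ, map_add, map_mul, hφM, hθp, hθr]
    ext i j
    fin_cases i <;> fin_cases j <;> simp [Matrix.mul_apply]
  have hψθ : ψ.comp θ = AlgHom.id K _ := by
    apply QIAlg.algHom_ext
    · simp [hθp, hψ]
    · simp only [AlgHom.comp_apply, hθq, hψ, AlgHom.id_apply]
      simp [hφr, hφs]
      linear_combination (norm := noncomm_ring) x * hgen.p_r_add - hq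
    · simp [hθr, hψ]
    · simp only [AlgHom.comp_apply, hθs, hψ, AlgHom.id_apply]
      simp [hφs, hφt]
      linear_combination (norm := noncomm_ring) z * hgen.p_r_add - hs
  exact ⟨AlgEquiv.ofAlgHom θ ψ hθψ hψθ, hθp, hθq, hθr, hθs⟩
end

section
/- Let L/K be cyclic of degree n with Galois group generated by σ. The map K^×/N_{L/K}(L^×) → Br(L/K) sending the class of b to the class of the cyclic algebra (L/K,b) is a group isomorphism onto the relative Brauer group Br(L/K). -/
open TensorProduct

/-- The relations presenting the cyclic algebra `(L/K, b)` attached to a cyclic extension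
`L/K` with `Gal(L/K) = ⟨σ⟩` of order `n` and `b ∈ K^×`: the free `K`-algebra on the
elements of `L` (generators `Sum.inl x`) and one generator `v = Sum.inr ()`, modulo the
relations making `L → A` a `K`-algebra map together with `vⁿ = b` and `vλ = σ(λ)v`. -/
def cycRel (K L : Type*) [Field K] [Field L] [Algebra K L] (σ : L ≃ₐ[K] L) (n : ℕ)
    (b : K) : FreeAlgebra K (L ⊕ Unit) → FreeAlgebra K (L ⊕ Unit) → Prop := fun u w =>
  letI ι : L ⊕ Unit → FreeAlgebra K (L ⊕ Unit) := FreeAlgebra.ι K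
  (∃ x y : L, u = ι (Sum.inl (x + y)) ∧ w = ι (Sum.inl x) + ι (Sum.inl y)) ∨
  (∃ x y : L, u = ι (Sum.inl (x * y)) ∧ w = ι (Sum.inl x) * ι (Sum.inl y)) ∨
  (∃ k : K, u = ι (Sum.inl (algebraMap K L k)) ∧ w = algebraMap K _ k) ∨
  (u = ι (Sum.inr ()) ^ n ∧ w = algebraMap K _ b) ∨
  (∃ x : L, u = ι (Sum.inr ()) * ι (Sum.inl x) ∧ w = ι (Sum.inl (σ x)) * ι (Sum.inr ()))

/-- The cyclic algebra `(L/K, b)`, presented by generators and relations. -/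
def CyclicAlg (K L : Type*) [Field K] [Field L] [Algebra K L] (σ : L ≃ₐ[K] L) (n : ℕ)
    (b : K) := RingQuot (cycRel K L σ n b)

noncomputable instance (K L : Type*) [Field K] [Field L] [Algebra K L] (σ : L ≃ₐ[K] L)
    (n : ℕ) (b : K) : Ring (CyclicAlg K L σ n b) := inferInstanceAs (Ring (RingQuot _))

noncomputable instance (K L : Type*) [Field K] [Field L] [Algebra K L] (σ : L ≃ₐ[K] L)
    (n : ℕ) (b : K) : Algebra K (CyclicAlg K L σ n b) :=
  inferInstanceAs (Algebra K (RingQuot _))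

/-- The canonical map `L → (L/K, b)`. -/
noncomputable def cycI (K L : Type*) [Field K] [Field L] [Algebra K L] (σ : L ≃ₐ[K] L)
    (n : ℕ) (b : K) (x : L) : CyclicAlg K L σ n b :=
  RingQuot.mkAlgHom K _ (FreeAlgebra.ι K (Sum.inl x))

/-- The element `v` of the cyclic algebra `(L/K, b)`. -/
noncomputable def cycV (K L : Type*) [Field K] [Field L] [Algebra K L] (σ : L ≃ₐ[K] L)
    (n : ℕ) (b : K) : CyclicAlg K L σ n b :=
  RingQuot.mkAlgHom K _ (FreeAlgebra.ι K (Sum.inr ()))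

/-- Brauer equivalence of two `K`-algebras: some matrix amplifications are isomorphic. -/
def BrauerEquiv (K : Type*) [Field K] (A B : Type*) [Ring A] [Algebra K A] [Ring B]
    [Algebra K B] : Prop :=
  ∃ m k : ℕ, 0 < m ∧ 0 < k ∧
    Nonempty (Matrix (Fin m) (Fin m) A ≃ₐ[K] Matrix (Fin k) (Fin k) B)

universe u

namespace CyclicAlg

section Presentation

variable {K L : Type*} [Field K] [Field L] [Algebra K L] (σ : L ≃ₐ[K] L) (n : ℕ) (b : K)

theorem mk_eq_of_rel {u w : FreeAlgebra K (L ⊕ Unit)} (h : cycRel K L σ n b u w) :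
    RingQuot.mkAlgHom K (cycRel K L σ n b) u = RingQuot.mkAlgHom K (cycRel K L σ n b) w :=
  RingQuot.mkAlgHom_rel K h

/-- The canonical embedding `L → (L/K, b)` as an algebra homomorphism. -/
noncomputable def incl : L →ₐ[K] CyclicAlg K L σ n b :=
  have hK (k : K) : cycI K L σ n b (algebraMap K L k) = algebraMap K _ k :=
    (mk_eq_of_rel σ n b (Or.inr (Or.inr (Or.inl ⟨k, rfl, rfl⟩)))).trans (AlgHom.commutes _ _)
  have hadd (x y : L) : cycI K L σ n b (x + y) = cycI K L σ n b x + cycI K L σ n b y :=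
    (mk_eq_of_rel σ n b (Or.inl ⟨x, y, rfl, rfl⟩)).trans (map_add _ _ _)
  have hmul (x y : L) : cycI K L σ n b (x * y) = cycI K L σ n b x * cycI K L σ n b y :=
    (mk_eq_of_rel σ n b (Or.inr (Or.inl ⟨x, y, rfl, rfl⟩))).trans (map_mul _ _ _)
  { toFun := cycI K L σ n b
    map_one' := by simpa using hK 1
    map_mul' := hmul
    map_zero' := by simpa using hK 0
    map_add' := hadd
    commutes' := hK }

theorem cycV_pow : cycV K L σ n b ^ n = algebraMap K _ b :=
  ((map_pow _ _ _).symm.trans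
    (mk_eq_of_rel σ n b (Or.inr (Or.inr (Or.inr (Or.inl ⟨rfl, rfl⟩)))))).trans
      (AlgHom.commutes _ _)

theorem cycV_mul_incl (x : L) :
    cycV K L σ n b * incl σ n b x = incl σ n b (σ x) * cycV K L σ n b :=
  ((map_mul _ _ _).symm.trans
    (mk_eq_of_rel σ n b (Or.inr (Or.inr (Or.inr (Or.inr ⟨x, rfl, rfl⟩)))))).trans (map_mul _ _ _)

variable {σ n b} in
/-- The universal property of the cyclic algebra. -/
noncomputable def lift {B : Type*} [Ring B] [Algebra K B] (f : L →ₐ[K] B) (w : B)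
    (hw : w ^ n = algebraMap K B b) (hf : ∀ x, w * f x = f (σ x) * w) :
    CyclicAlg K L σ n b →ₐ[K] B :=
  RingQuot.liftAlgHom K ⟨FreeAlgebra.lift K (Sum.elim f fun _ => w), by
    rintro _ _
      (⟨x, y, rfl, rfl⟩ | ⟨x, y, rfl, rfl⟩ | ⟨k, rfl, rfl⟩ | ⟨rfl, rfl⟩ | ⟨x, rfl, rfl⟩) <;>
      simp [hw, hf]⟩

section lift

variable {σ n b} {B : Type*} [Ring B] [Algebra K B] (f : L →ₐ[K] B) (w : B)
    (hw : w ^ n = algebraMap K B b) (hf : ∀ x, w * f x = f (σ x) * w)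

@[simp]
theorem lift_incl (x : L) : lift f w hw hf (incl σ n b x) = f x :=
  (RingQuot.liftAlgHom_mkAlgHom_apply ..).trans (by simp)

@[simp]
theorem lift_cycV : lift f w hw hf (cycV K L σ n b) = w :=
  (RingQuot.liftAlgHom_mkAlgHom_apply ..).trans (by simp)

end lift

@[elab_as_elim]
theorem induction {motive : CyclicAlg K L σ n b → Prop}
    (incl : ∀ x, motive (incl σ n b x)) (cycV : motive (cycV K L σ n b))
    (mul : ∀ x y, motive x → motive y → motive (x * y))
    (add : ∀ x y, motive x → motive y → motive (x + y)) (y : CyclicAlg K L σ n b) : motive y := by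
  obtain ⟨y, rfl⟩ := RingQuot.mkAlgHom_surjective K (cycRel K L σ n b) y
  induction y using FreeAlgebra.induction with
  | grade0 k =>
    have := incl (algebraMap K L k)
    rw [AlgHom.commutes] at this ⊢
    exact this
  | grade1 x => rcases x with x | ⟨⟩; exacts [incl x, cycV]
  | mul x y hx hy => rw [map_mul]; exact mul _ _ hx hy
  | add x y hx hy => rw [map_add]; exact add _ _ hx hy

/-- The monomials `λ vⁱ` with arbitrary `i` span the cyclic algebra. -/
theorem span_monomials :
    Submodule.span K (Set.range fun p : L × ℕ => incl σ n b p.1 * cycV K L σ n b ^ p.2) = ⊤ := by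
  set R := Submodule.span K (Set.range fun p : L × ℕ => incl σ n b p.1 * cycV K L σ n b ^ p.2)
  have mem (x : L) (i : ℕ) : incl σ n b x * cycV K L σ n b ^ i ∈ R :=
    Submodule.subset_span ⟨(x, i), rfl⟩
  have key (y : CyclicAlg K L σ n b) : ∀ r ∈ R, y * r ∈ R := by
    induction y using induction with
    | incl x =>
      intro r hr
      induction hr using Submodule.span_induction with
      | mem r hr => obtain ⟨⟨z, i⟩, rfl⟩ := hr; simpa [mul_assoc] using mem (x * z) i
      | zero => simp
      | add r s _ _ hr hs => rw [mul_add]; exact R.add_mem hr hs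
      | smul k r _ hr => rw [mul_smul_comm]; exact R.smul_mem _ hr
    | cycV =>
      intro r hr
      induction hr using Submodule.span_induction with
      | mem r hr =>
        obtain ⟨⟨z, i⟩, rfl⟩ := hr
        simpa [← mul_assoc, cycV_mul_incl, pow_succ'] using mem (σ z) (i + 1)
      | zero => simp
      | add r s _ _ hr hs => rw [mul_add]; exact R.add_mem hr hs
      | smul k r _ hr => rw [mul_smul_comm]; exact R.smul_mem _ hr
    | mul x y hx hy => intro r hr; rw [mul_assoc]; exact hx _ (hy _ hr)
    | add x y hx hy => intro r hr; rw [add_mul]; exact R.add_mem (hx _ hr) (hy _ hr)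
  exact eq_top_iff.2 fun y _ => by simpa using key y 1 (by simpa using mem 1 0)

/-- The parametrization of the cyclic algebra by coefficients with respect to `1, v, …, vⁿ⁻¹`. -/
noncomputable def ofCoeff : (Fin n → L) →ₗ[K] CyclicAlg K L σ n b :=
  ∑ i : Fin n, (LinearMap.mulRight K (cycV K L σ n b ^ (i : ℕ))).comp
    ((incl σ n b).toLinearMap.comp (LinearMap.proj i))

variable {n} in
theorem ofCoeff_surjective (hn : 0 < n) : Function.Surjective (ofCoeff σ n b) := by
  rw [← LinearMap.range_eq_top, eq_top_iff, ← span_monomials, Submodule.span_le]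
  rintro _ ⟨⟨x, i⟩, rfl⟩
  refine ⟨Pi.single ⟨i % n, Nat.mod_lt _ hn⟩ (algebraMap K L (b ^ (i / n)) * x), ?_⟩
  rw [ofCoeff, LinearMap.sum_apply, Finset.sum_eq_single ⟨i % n, Nat.mod_lt _ hn⟩]
  · conv_rhs => simp only []; rw [← Nat.mod_add_div i n, pow_add, pow_mul, cycV_pow, ← map_pow,
      ← Algebra.commutes, ← mul_assoc, ← Algebra.commutes]
    simp
  · intro j _ hj
    simp [Pi.single_eq_of_ne hj]
  · simp

variable {n} in
theorem finite [FiniteDimensional K L] (hn : 0 < n) : Module.Finite K (CyclicAlg K L σ n b) :=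
  Module.Finite.of_surjective _ (ofCoeff_surjective σ b hn)

variable {n} in
theorem finrank_le [FiniteDimensional K L] (hn : 0 < n) :
    Module.finrank K (CyclicAlg K L σ n b) ≤ n * Module.finrank K L := by
  simpa [Module.finrank_pi_fintype] using
    (ofCoeff σ n b).finrank_le_finrank_of_surjective (ofCoeff_surjective σ b hn)

end Presentation

end CyclicAlg

/-- The twisted power `P · f(P) ⋯ fᵏ⁻¹(P)`. -/
def twistPow {M : Type*} [Monoid M] (f : M → M) (P : M) : ℕ → M
  | 0 => 1
  | k + 1 => P * f (twistPow f P k)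

section twistPow

variable {M N : Type*} [Monoid M] [Monoid N]

theorem twistPow_of_fixed {F : Type*} [FunLike F M M] [MonoidHomClass F M M] (f : F) {P : M}
    (hP : f P = P) (k : ℕ) : twistPow f P k = P ^ k := by
  induction k with
  | zero => simp [twistPow]
  | succ k ih => rw [twistPow, ih, map_pow, hP, pow_succ']

theorem twistPow_succ_right {F : Type*} [FunLike F M M] [MonoidHomClass F M M] (f : F) (P : M)
    (k : ℕ) : twistPow f P (k + 1) = twistPow f P k * f^[k] P := by
  induction k with
  | zero => simp [twistPow]
  | succ k ih =>
    calc twistPow f P (k + 1 + 1) = P * f (twistPow f P k * f^[k] P) := by rw [← ih]; rfl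
      _ = twistPow f P (k + 1) * f^[k + 1] P := by
        rw [map_mul, ← mul_assoc, Function.iterate_succ_apply']; rfl

theorem map_twistPow {F : Type*} [FunLike F M N] [MonoidHomClass F M N] (g : F) {f : M → M}
    {f' : N → N} (h : ∀ x, g (f x) = f' (g x)) (P : M) (k : ℕ) :
    g (twistPow f P k) = twistPow f' (g P) k := by
  induction k with
  | zero => simp [twistPow]
  | succ k ih => rw [twistPow, map_mul, h, ih, twistPow]

theorem twistPow_eq_prod {M : Type*} [CommMonoid M] {F : Type*} [FunLike F M M]
    [MonoidHomClass F M M] (f : F) (P : M) (k : ℕ) :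
    twistPow f P k = ∏ i ∈ Finset.range k, f^[i] P := by
  induction k with
  | zero => simp [twistPow]
  | succ k ih =>
    rw [twistPow, ih, Finset.prod_range_succ', map_prod, mul_comm]
    simp only [← Function.iterate_succ_apply' f, Function.iterate_zero, id]

end twistPow

section Conjugation

variable {K L ι : Type*} [Field K] [Field L] [Algebra K L] [Fintype ι] [DecidableEq ι]
  (σ : L ≃ₐ[K] L)

variable (ι) in
/-- The action of a field automorphism on the entries of square matrices. -/
def matConj : Matrix ι ι L →ₐ[K] Matrix ι ι L := (σ : L →ₐ[K] L).mapMatrix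

@[simp]
theorem matConj_apply (X : Matrix ι ι L) (i j : ι) : matConj ι σ X i j = σ (X i j) := rfl

@[simp]
theorem matConj_smul (c : L) (X : Matrix ι ι L) :
    matConj ι σ (c • X) = σ c • matConj ι σ X := by
  ext; simp

theorem iterate_matConj_apply (k : ℕ) (X : Matrix ι ι L) (i j : ι) :
    (matConj ι σ)^[k] X i j = (σ ^ k) (X i j) := by
  induction k with
  | zero => simp
  | succ k ih => rw [Function.iterate_succ_apply', matConj_apply, ih, pow_succ']; rfl

/-- If `P₂σ(Q) = c Q P₁`, then the twisted powers of `P₂` and `P₁` differ by the twisted power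
of `c`. -/
theorem twistPow_mul_of_intertwine {P₁ P₂ Q : Matrix ι ι L} {c : L}
    (h : P₂ * matConj ι σ Q = c • (Q * P₁)) (k : ℕ) :
    twistPow (matConj ι σ) P₂ k * (matConj ι σ)^[k] Q =
      twistPow σ c k • (Q * twistPow (matConj ι σ) P₁ k) := by
  induction k with
  | zero => simp [twistPow]
  | succ k ih =>
    rw [Function.iterate_succ_apply', twistPow, mul_assoc, ← map_mul, ih, matConj_smul, map_mul,
      Matrix.mul_smul, ← mul_assoc, h, twistPow, twistPow, Matrix.smul_mul, smul_smul, mul_comm c,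
      mul_assoc]

theorem exists_conj_of_algEquiv (f : Matrix ι ι L ≃ₐ[L] Matrix ι ι L) :
    ∃ Q : Matrix ι ι L, IsUnit Q ∧ ∀ X, Q * X = f X * Q := by
  obtain ⟨T, hT⟩ := ((Matrix.toLinAlgEquiv' (R := L) (n := ι)).symm.trans
    (f.trans Matrix.toLinAlgEquiv')).eq_linearEquivConjAlgEquiv
  refine ⟨Matrix.toLinAlgEquiv'.symm T.toLinearMap, ?_, fun X => ?_⟩
  · rw [isUnit_map_iff, Module.End.isUnit_iff]
    exact T.bijective
  · have := congr($hT (Matrix.toLinAlgEquiv' X))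
    apply Matrix.toLinAlgEquiv'.injective
    simp only [AlgEquiv.trans_apply, AlgEquiv.symm_apply_apply] at this
    rw [map_mul, map_mul, AlgEquiv.apply_symm_apply, this]
    ext; simp [LinearEquiv.conjAlgEquiv_apply]

end Conjugation

/-- A splitting of the `K`-algebra `A` by `L` with the parameter `b`: a map `j : A → Mᵢ(L)` which
becomes an isomorphism over `L`, and an invertible `P` such that the `σ`-semilinear operator `Pσ`
commutes with `j(A)` and satisfies `(Pσ)ⁿ = b⁻¹`. -/
structure IsSplitting {K L ι A : Type*} [Field K] [Field L] [Algebra K L] [Fintype ι]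
    [DecidableEq ι] [Ring A] [Algebra K A] (σ : L ≃ₐ[K] L) (n : ℕ)
    (j : A →ₐ[K] Matrix ι ι L) (P : Matrix ι ι L) (b : K) : Prop where
  span_eq_top : Submodule.span L (Set.range j) = ⊤
  finite : Module.Finite K A
  finrank_le : Module.finrank K A ≤ Fintype.card ι * Fintype.card ι
  ne_zero : b ≠ 0
  isUnit : IsUnit P
  comm : ∀ a, P * matConj ι σ (j a) = j a * P
  pow : twistPow (matConj ι σ) P n = algebraMap K _ b⁻¹

section BaseChange

variable {K L ι A : Type*} [Field K] [Field L] [Algebra K L] [Fintype ι] [DecidableEq ι]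
  [Ring A] [Algebra K A]

/-- The `L`-linear extension of a map to matrices over `L`. -/
noncomputable def matExtend (j : A →ₐ[K] Matrix ι ι L) : L ⊗[K] A →ₐ[L] Matrix ι ι L :=
  Algebra.TensorProduct.lift (Algebra.ofId L _) j fun x _ => Algebra.commutes x _

@[simp]
theorem matExtend_tmul (j : A →ₐ[K] Matrix ι ι L) (x : L) (a : A) :
    matExtend j (x ⊗ₜ a) = x • j a := by
  rw [Algebra.smul_def]
  exact Algebra.TensorProduct.lift_tmul ..

theorem matExtend_surjective {j : A →ₐ[K] Matrix ι ι L}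
    (hj : Submodule.span L (Set.range j) = ⊤) : Function.Surjective (matExtend j) := by
  rw [← AlgHom.coe_toLinearMap, ← LinearMap.range_eq_top, eq_top_iff, ← hj, Submodule.span_le]
  rintro _ ⟨a, rfl⟩
  exact ⟨1 ⊗ₜ a, by simp⟩

theorem card_mul_card_le_finrank [Module.Finite K A] {j : A →ₐ[K] Matrix ι ι L}
    (hj : Submodule.span L (Set.range j) = ⊤) :
    Fintype.card ι * Fintype.card ι ≤ Module.finrank K A := by
  have := (matExtend j).toLinearMap.finrank_le_finrank_of_surjective (matExtend_surjective hj)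
  simpa [Module.finrank_matrix, Module.finrank_baseChange] using this

theorem matExtend_bijective [Module.Finite K A] {j : A →ₐ[K] Matrix ι ι L}
    (hj : Submodule.span L (Set.range j) = ⊤)
    (hA : Module.finrank K A ≤ Fintype.card ι * Fintype.card ι) :
    Function.Bijective (matExtend j) := by
  refine ⟨?_, matExtend_surjective hj⟩
  have h : Module.finrank L (L ⊗[K] A) = Module.finrank L (Matrix ι ι L) := by
    simpa [Module.finrank_matrix, Module.finrank_baseChange] using
      hA.antisymm (card_mul_card_le_finrank hj)
  exact (LinearMap.injective_iff_surjective_of_finrank_eq_finrank h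
    (f := (matExtend j).toLinearMap)).2 (matExtend_surjective hj)

/-- Two maps from a split algebra to the matrix algebra over the splitting field are conjugate. -/
theorem exists_conj_of_span_eq_top [Nonempty ι] [Module.Finite K A] {j₁ : A →ₐ[K] Matrix ι ι L}
    (hj : Submodule.span L (Set.range j₁) = ⊤)
    (hA : Module.finrank K A ≤ Fintype.card ι * Fintype.card ι) (j₂ : A →ₐ[K] Matrix ι ι L) :
    ∃ Q : Matrix ι ι L, IsUnit Q ∧ ∀ a, Q * j₁ a = j₂ a * Q := by
  let e := AlgEquiv.ofBijective (matExtend j₁) (matExtend_bijective hj hA)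
  let φ : Matrix ι ι L →ₐ[L] Matrix ι ι L := (matExtend j₂).comp e.symm.toAlgHom
  have hφ : Function.Injective φ := RingHom.injective φ.toRingHom
  have hφ' : Function.Surjective φ :=
    (LinearMap.injective_iff_surjective (f := φ.toLinearMap)).1 hφ
  obtain ⟨Q, hQ, h⟩ := exists_conj_of_algEquiv (AlgEquiv.ofBijective φ ⟨hφ, hφ'⟩)
  refine ⟨Q, hQ, fun a => ?_⟩
  have he : e.symm (j₁ a) = 1 ⊗ₜ a := by
    rw [AlgEquiv.symm_apply_eq]; simp [e]
  rw [h]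
  change matExtend j₂ (e.symm (j₁ a)) * Q = _
  rw [he, matExtend_tmul, one_smul]

/-- A matrix commuting with a set spanning the matrix algebra is scalar. -/
theorem exists_eq_smul_one_of_commute [Nonempty ι] {s : Set (Matrix ι ι L)}
    (hs : Submodule.span L s = ⊤) {X : Matrix ι ι L} (hX : ∀ Y ∈ s, Commute X Y) :
    ∃ c : L, X = c • 1 := by
  have key (Y : Matrix ι ι L) : Commute X Y := by
    have hY : Y ∈ Submodule.span L s := hs ▸ Submodule.mem_top
    induction hY using Submodule.span_induction with
    | mem Y hY => exact hX Y hY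
    | zero => exact Commute.zero_right _
    | add Y Z _ _ hY hZ => exact hY.add_right hZ
    | smul c Y _ hY => exact hY.smul_right c
  obtain ⟨c, hc⟩ := Matrix.mem_range_scalar_of_commute_single
    (M := X) fun i j _ => (key _).symm
  exact ⟨c, by rw [← hc, Matrix.smul_one_eq_diagonal]; rfl⟩

end BaseChange

section Cyclic

variable {K L : Type*} [Field K] [Field L] [Algebra K L] {σ : L ≃ₐ[K] L}

theorem commute_of_generator (hσ : ∀ τ : L ≃ₐ[K] L, τ ∈ Subgroup.zpowers σ) (τ : L ≃ₐ[K] L) :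
    Commute σ τ := by
  obtain ⟨k, rfl⟩ := hσ τ
  exact (Commute.refl σ).zpow_right k

variable [FiniteDimensional K L]

theorem exists_pow_of_generator (hσ : ∀ τ : L ≃ₐ[K] L, τ ∈ Subgroup.zpowers σ) (τ : L ≃ₐ[K] L) :
    ∃ k : ℕ, σ ^ k = τ :=
  (isOfFinOrder_of_finite σ).mem_powers_iff_mem_zpowers.2 (hσ τ)

variable [IsGalois K L]

theorem orderOf_eq_finrank (hσ : ∀ τ : L ≃ₐ[K] L, τ ∈ Subgroup.zpowers σ) :
    orderOf σ = Module.finrank K L := by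
  rw [orderOf_eq_card_of_forall_mem_zpowers hσ, IsGalois.card_aut_eq_finrank]

theorem pow_finrank_eq_one (hσ : ∀ τ : L ≃ₐ[K] L, τ ∈ Subgroup.zpowers σ) :
    σ ^ Module.finrank K L = 1 := by
  rw [← orderOf_eq_finrank hσ, pow_orderOf_eq_one]

theorem prod_range_mul_pow {M : Type*} [CommMonoid M]
    (hσ : ∀ τ : L ≃ₐ[K] L, τ ∈ Subgroup.zpowers σ) (f : (L ≃ₐ[K] L) → M) (τ : L ≃ₐ[K] L) :
    ∏ i ∈ Finset.range (Module.finrank K L), f (τ * σ ^ i) = ∏ g, f g := by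
  refine Finset.prod_nbij (fun i => τ * σ ^ i) (by simp) (fun i hi j hj h => ?_) (fun g _ => ?_)
    (by simp)
  · rw [← orderOf_eq_finrank hσ] at hi hj
    exact pow_injOn_Iio_orderOf (by simpa using hi) (by simpa using hj) (mul_left_cancel h)
  · obtain ⟨k, hk⟩ := exists_pow_of_generator hσ (τ⁻¹ * g)
    refine ⟨k % orderOf σ, ?_, ?_⟩
    · rw [← orderOf_eq_finrank hσ]
      simpa using Nat.mod_lt _ (orderOf_pos σ)
    · simp [pow_mod_orderOf, hk]

theorem twistPow_eq_norm (hσ : ∀ τ : L ≃ₐ[K] L, τ ∈ Subgroup.zpowers σ) (c : L) :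
    twistPow σ c (Module.finrank K L) = algebraMap K L (Algebra.norm K c) := by
  rw [twistPow_eq_prod, Algebra.norm_eq_prod_automorphisms,
    ← prod_range_mul_pow hσ (fun g => g c) 1]
  refine Finset.prod_congr rfl fun i _ => ?_
  rw [one_mul, AlgEquiv.coe_pow]

theorem iterate_matConj_finrank {ι : Type*} [Fintype ι] [DecidableEq ι]
    (hσ : ∀ τ : L ≃ₐ[K] L, τ ∈ Subgroup.zpowers σ) (X : Matrix ι ι L) :
    (matConj ι σ)^[Module.finrank K L] X = X := by
  ext i j
  rw [iterate_matConj_apply, pow_finrank_eq_one hσ, AlgEquiv.one_apply]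

end Cyclic

namespace CyclicAlg

section Regular

variable {K L : Type*} [Field K] [Field L] [Algebra K L] [FiniteDimensional K L]
  [DecidableEq (L ≃ₐ[K] L)] (σ : L ≃ₐ[K] L) (b : K)

variable (K L) in
/-- The diagonal matrices of Galois conjugates. -/
noncomputable def regDiag : L →ₐ[K] Matrix (L ≃ₐ[K] L) (L ≃ₐ[K] L) L :=
  (Matrix.diagonalAlgHom K).comp (AlgHom.pi fun τ : L ≃ₐ[K] L => (τ : L →ₐ[K] L))

theorem regDiag_apply (x : L) :
    regDiag K L x = Matrix.diagonal fun τ : L ≃ₐ[K] L => τ x := rfl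

/-- The weight attached to a Galois automorphism in the matrix of the generator `v`. -/
def regWeight (τ : L ≃ₐ[K] L) : L := if τ = 1 then algebraMap K L b else 1

/-- The weighted cyclic permutation matrix representing the generator `v`. -/
def regV : Matrix (L ≃ₐ[K] L) (L ≃ₐ[K] L) L :=
  Matrix.of fun τ τ' => if τ' = τ * σ then regWeight b τ else 0

theorem regV_pow_apply (k : ℕ) (τ τ' : L ≃ₐ[K] L) :
    (regV σ b ^ k) τ τ' =
      if τ' = τ * σ ^ k then ∏ i ∈ Finset.range k, regWeight b (τ * σ ^ i) else 0 := by
  induction k generalizing τ' with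
  | zero => simp [Matrix.one_apply, eq_comm]
  | succ k ih =>
    rw [pow_succ, Matrix.mul_apply, Finset.sum_eq_single (τ * σ ^ k)]
    · rw [ih, if_pos rfl]
      simp [regV, pow_succ, mul_assoc, Finset.prod_range_succ]
    · intro ρ _ hρ
      simp [ih, hρ]
    · simp

theorem regV_mul_regDiag (x : L) :
    regV σ b * regDiag K L x = regDiag K L (σ x) * regV σ b := by
  ext τ τ'
  rw [regDiag_apply, regDiag_apply, Matrix.mul_diagonal, Matrix.diagonal_mul]
  by_cases h : τ' = τ * σ
  · subst h; rw [AlgEquiv.mul_apply, mul_comm]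
  · simp [regV, h]

theorem matConj_regV : matConj _ σ (regV σ b) = regV σ b := by
  ext τ τ'
  simp only [matConj_apply, regV, regWeight, Matrix.of_apply]
  split_ifs <;> simp

variable {σ} (hσ : ∀ τ : L ≃ₐ[K] L, τ ∈ Subgroup.zpowers σ)

include hσ in
theorem matConj_regDiag (x : L) : matConj _ σ (regDiag K L x) = regDiag K L (σ x) := by
  ext τ τ'
  simp only [matConj_apply, regDiag_apply, Matrix.diagonal_apply]
  split_ifs
  · exact congr($((commute_of_generator hσ τ).eq) x)
  · simp

variable [IsGalois K L]

include hσ in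
theorem regV_pow_finrank :
    regV σ b ^ Module.finrank K L = algebraMap K _ b := by
  ext τ τ'
  rw [regV_pow_apply, prod_range_mul_pow hσ, pow_finrank_eq_one hσ, Matrix.algebraMap_matrix_apply]
  simp [regWeight, eq_comm]

/-- The regular representation of `(L/K, b)` by matrices over `L`. -/
noncomputable def reg :
    CyclicAlg K L σ (Module.finrank K L) b →ₐ[K] Matrix (L ≃ₐ[K] L) (L ≃ₐ[K] L) L :=
  lift (regDiag K L) (regV σ b) (regV_pow_finrank b hσ) (regV_mul_regDiag σ b)

variable {b} in
theorem span_range_reg (hb : b ≠ 0) : Submodule.span L (Set.range (reg b hσ)) = ⊤ := by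
  by_contra h
  obtain ⟨φ, hφ, hle⟩ := Submodule.exists_le_ker_of_lt_top _ (lt_top_iff_ne_top.2 h)
  have hli : LinearIndependent L fun τ : L ≃ₐ[K] L => (τ : L →ₐ[K] L).toLinearMap :=
    (linearIndependent_toLinearMap K L L).comp _ AlgEquiv.coe_toAlgHom_injective
  rw [Fintype.linearIndependent_iff] at hli
  have hw (τ : L ≃ₐ[K] L) : regWeight b τ ≠ 0 := by
    unfold regWeight
    split_ifs <;> simp [hb]
  refine hφ (Matrix.ext_linearMap _ fun τ τ' => LinearMap.ext_ring ?_)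
  obtain ⟨k, hk⟩ := exists_pow_of_generator hσ (τ⁻¹ * τ')
  have hzero := hli (fun ρ => (∏ i ∈ Finset.range k, regWeight b (ρ * σ ^ i)) *
    φ (Matrix.single ρ (ρ * σ ^ k) 1)) (LinearMap.ext fun x => by
      have := hle (Submodule.subset_span ⟨incl σ _ b x * cycV K L σ _ b ^ k, rfl⟩)
      rw [LinearMap.mem_ker, map_mul, map_pow, reg, lift_incl, lift_cycV, regDiag_apply] at this
      rw [LinearMap.zero_apply, ← this, LinearMap.sum_apply]
      conv_rhs => rw [Matrix.matrix_eq_sum_single (Matrix.diagonal _ * _), map_sum]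
      refine Finset.sum_congr rfl fun ρ _ => ?_
      rw [map_sum, Finset.sum_eq_single (ρ * σ ^ k)]
      · rw [Matrix.diagonal_mul, regV_pow_apply, if_pos rfl, ← mul_one (ρ x * _),
          ← smul_eq_mul (ρ x * _), ← Matrix.smul_single, map_smul]
        simp [mul_comm, mul_assoc]
      · intro ρ' _ h'
        rw [Matrix.diagonal_mul, regV_pow_apply, if_neg h', mul_zero, Matrix.single_zero, map_zero]
      · simp) τ
  rw [mul_eq_zero, or_iff_right (Finset.prod_ne_zero_iff.2 fun _ _ => hw _), hk,
    mul_inv_cancel_left] at hzero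
  simpa using hzero

theorem matConj_reg_mul (a : CyclicAlg K L σ (Module.finrank K L) b) :
    matConj _ σ (reg b hσ a) * regV σ b = regV σ b * reg b hσ a := by
  induction a using CyclicAlg.induction with
  | incl x => rw [reg, lift_incl, matConj_regDiag hσ, regV_mul_regDiag]
  | cycV => rw [reg, lift_cycV, matConj_regV]
  | mul x y hx hy => rw [map_mul, map_mul, mul_assoc, hy, ← mul_assoc, hx, mul_assoc]
  | add x y hx hy => rw [map_add, map_add, add_mul, hx, hy, mul_add]

variable {b} in
theorem isSplitting_reg (hb : b ≠ 0) :
    IsSplitting σ (Module.finrank K L) (reg b hσ)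
      (b⁻¹ • regV σ b ^ (Module.finrank K L - 1)) b := by
  have hn : Module.finrank K L - 1 + 1 = Module.finrank K L :=
    Nat.sub_add_cancel Module.finrank_pos
  have hVP : regV σ b * (b⁻¹ • regV σ b ^ (Module.finrank K L - 1)) = 1 := by
    rw [mul_smul_comm, ← pow_succ', hn, regV_pow_finrank b hσ, Algebra.algebraMap_eq_smul_one,
      smul_smul, inv_mul_cancel₀ hb, one_smul]
  have hPV := mul_eq_one_comm.1 hVP
  have hP : matConj _ σ (b⁻¹ • regV σ b ^ (Module.finrank K L - 1)) =
      b⁻¹ • regV σ b ^ (Module.finrank K L - 1) := by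
    rw [map_smul, map_pow, matConj_regV]
  generalize b⁻¹ • regV σ b ^ (Module.finrank K L - 1) = P at hVP hPV hP
  have hcard : Fintype.card (L ≃ₐ[K] L) = Module.finrank K L := by
    rw [← Nat.card_eq_fintype_card, IsGalois.card_aut_eq_finrank]
  refine ⟨span_range_reg hσ hb, finite σ b Module.finrank_pos, ?_, hb,
    ⟨⟨P, regV σ b, hPV, hVP⟩, rfl⟩, fun a => ?_, ?_⟩
  · rw [hcard]
    exact finrank_le σ b Module.finrank_pos
  · calc P * matConj _ σ (reg b hσ a)
        = P * (matConj _ σ (reg b hσ a) * regV σ b) * P := by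
          rw [mul_assoc, mul_assoc, hVP, mul_one]
      _ = reg b hσ a * P := by rw [matConj_reg_mul, ← mul_assoc, hPV, one_mul]
  · have hcomm : Commute P (regV σ b) := hPV.trans hVP.symm
    rw [twistPow_of_fixed _ hP]
    calc P ^ Module.finrank K L
        = P ^ Module.finrank K L * (regV σ b ^ Module.finrank K L * algebraMap K _ b⁻¹) := by
          rw [regV_pow_finrank b hσ, ← map_mul, mul_inv_cancel₀ hb, map_one, mul_one]
      _ = algebraMap K _ b⁻¹ := by
          rw [← mul_assoc, ← hcomm.mul_pow, hPV, one_pow, one_mul]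

end Regular

end CyclicAlg

namespace IsSplitting

open scoped Kronecker

section Constructions

variable {K L ι κ A B : Type*} [Field K] [Field L] [Algebra K L] [Fintype ι] [DecidableEq ι]
  [Fintype κ] [DecidableEq κ] [Ring A] [Algebra K A] [Ring B] [Algebra K B] {σ : L ≃ₐ[K] L}
  {n : ℕ}

/-- Splittings can be transported along isomorphisms of algebras and bijections of index types. -/
theorem transport {j : A →ₐ[K] Matrix ι ι L} {P : Matrix ι ι L} {b : K}
    (h : IsSplitting σ n j P b) (e : B ≃ₐ[K] A) (r : ι ≃ κ) :
    IsSplitting σ n (((Matrix.reindexAlgEquiv K L r).toAlgHom.comp j).comp e.toAlgHom)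
      (Matrix.reindexAlgEquiv K L r P) b := by
  have hconj (X : Matrix ι ι L) : Matrix.reindexAlgEquiv K L r (matConj ι σ X) =
      matConj κ σ (Matrix.reindexAlgEquiv K L r X) := by
    ext; simp
  have := h.finite
  refine ⟨?_, Module.Finite.equiv e.symm.toLinearEquiv, ?_, h.ne_zero, h.isUnit.map _, fun a => ?_,
    ?_⟩
  · have hr : Set.range (((Matrix.reindexAlgEquiv K L r).toAlgHom.comp j).comp e.toAlgHom) =
        Set.image (Matrix.reindexLinearEquiv L L r r) (Set.range j) := by
      rw [← Set.range_comp, ← e.surjective.range_comp]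
      rfl
    rw [hr, ← LinearEquiv.coe_coe, Submodule.span_image, h.span_eq_top, Submodule.map_top,
      LinearEquiv.range]
  · rw [e.toLinearEquiv.finrank_eq, ← Fintype.card_congr r]
    exact h.finrank_le
  · have := congr(Matrix.reindexAlgEquiv K L r $(h.comm (e a)))
    rwa [map_mul, map_mul, hconj] at this
  · rw [← map_twistPow (Matrix.reindexAlgEquiv K L r) hconj, h.pow]
    exact AlgEquiv.commutes _ _

/-- The Kronecker product of two representations over `L`. -/
noncomputable def kron (j₁ : A →ₐ[K] Matrix ι ι L) (j₂ : B →ₐ[K] Matrix κ κ L) :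
    A ⊗[K] B →ₐ[K] Matrix (ι × κ) (ι × κ) L :=
  ((Matrix.kroneckerAlgEquiv ι κ L).toAlgHom.restrictScalars K).comp
    ((Algebra.TensorProduct.mapOfCompatibleSMul L K K (Matrix ι ι L) (Matrix κ κ L)).comp
      (Algebra.TensorProduct.map j₁ j₂))

@[simp]
theorem kron_tmul (j₁ : A →ₐ[K] Matrix ι ι L) (j₂ : B →ₐ[K] Matrix κ κ L) (x : A) (y : B) :
    kron j₁ j₂ (x ⊗ₜ y) = j₁ x ⊗ₖ j₂ y := by
  simp [kron]

theorem matConj_kronecker (X : Matrix ι ι L) (Y : Matrix κ κ L) :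
    matConj (ι × κ) σ (X ⊗ₖ Y) = matConj ι σ X ⊗ₖ matConj κ σ Y := by
  ext; simp

theorem twistPow_kronecker (X : Matrix ι ι L) (Y : Matrix κ κ L) (k : ℕ) :
    twistPow (matConj (ι × κ) σ) (X ⊗ₖ Y) k =
      twistPow (matConj ι σ) X k ⊗ₖ twistPow (matConj κ σ) Y k := by
  induction k with
  | zero => simp [twistPow]
  | succ k ih =>
    rw [twistPow, ih, matConj_kronecker, ← Matrix.mul_kronecker_mul, twistPow, twistPow]

theorem span_range_kron {j₁ : A →ₐ[K] Matrix ι ι L} {j₂ : B →ₐ[K] Matrix κ κ L}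
    (h₁ : Submodule.span L (Set.range j₁) = ⊤) (h₂ : Submodule.span L (Set.range j₂) = ⊤) :
    Submodule.span L (Set.range (kron j₁ j₂)) = ⊤ := by
  set S := Submodule.span L (Set.range (kron j₁ j₂))
  have key (X : Matrix ι ι L) (Y : Matrix κ κ L) : X ⊗ₖ Y ∈ S := by
    have hX : X ∈ Submodule.span L (Set.range j₁) := h₁ ▸ Submodule.mem_top
    have hY : Y ∈ Submodule.span L (Set.range j₂) := h₂ ▸ Submodule.mem_top
    induction hX using Submodule.span_induction with
    | mem X hX =>
      obtain ⟨a, rfl⟩ := hX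
      induction hY using Submodule.span_induction with
      | mem Y hY =>
        obtain ⟨c, rfl⟩ := hY
        exact Submodule.subset_span ⟨a ⊗ₜ c, by simp⟩
      | zero => simp
      | add Y Z _ _ hY hZ => rw [Matrix.kronecker_add]; exact S.add_mem hY hZ
      | smul c Y _ hY => rw [Matrix.kronecker_smul]; exact S.smul_mem c hY
    | zero => simp
    | add X Z _ _ hX hZ => rw [Matrix.add_kronecker]; exact S.add_mem hX hZ
    | smul c X _ hX => rw [Matrix.smul_kronecker]; exact S.smul_mem c hX
  rw [Submodule.eq_top_iff']
  intro Z
  obtain ⟨t, rfl⟩ := (Matrix.kroneckerAlgEquiv ι κ L).surjective Z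
  induction t with
  | zero => simp
  | add s t hs ht => rw [map_add]; exact S.add_mem hs ht
  | tmul X Y => simpa using key X Y

/-- The parameters of splittings multiply under tensor products. -/
theorem tensor {j₁ : A →ₐ[K] Matrix ι ι L} {P₁ : Matrix ι ι L} {b₁ : K}
    {j₂ : B →ₐ[K] Matrix κ κ L} {P₂ : Matrix κ κ L} {b₂ : K}
    (h₁ : IsSplitting σ n j₁ P₁ b₁) (h₂ : IsSplitting σ n j₂ P₂ b₂) :
    IsSplitting σ n (kron j₁ j₂) (P₁ ⊗ₖ P₂) (b₁ * b₂) := by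
  have := h₁.finite
  have := h₂.finite
  refine ⟨span_range_kron h₁.span_eq_top h₂.span_eq_top, inferInstance, ?_,
    mul_ne_zero h₁.ne_zero h₂.ne_zero, ?_, fun a => ?_, ?_⟩
  · rw [Module.finrank_tensorProduct, Fintype.card_prod, mul_mul_mul_comm]
    exact Nat.mul_le_mul h₁.finrank_le h₂.finrank_le
  · obtain ⟨u, rfl⟩ := h₁.isUnit
    obtain ⟨w, rfl⟩ := h₂.isUnit
    exact ⟨⟨u.val ⊗ₖ w.val, u.inv ⊗ₖ w.inv, by simp [← Matrix.mul_kronecker_mul],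
      by simp [← Matrix.mul_kronecker_mul]⟩, rfl⟩
  · induction a with
    | zero => simp
    | add s t hs ht => rw [map_add, map_add, mul_add, hs, ht, add_mul]
    | tmul x y =>
      rw [kron_tmul, matConj_kronecker, ← Matrix.mul_kronecker_mul, h₁.comm, h₂.comm,
        Matrix.mul_kronecker_mul]
  · rw [twistPow_kronecker, h₁.pow, h₂.pow, mul_inv, map_mul, Algebra.algebraMap_eq_smul_one,
      Algebra.algebraMap_eq_smul_one, Matrix.smul_kronecker, Matrix.kronecker_smul,
      Matrix.one_kronecker_one, Algebra.algebraMap_eq_smul_one, Algebra.algebraMap_eq_smul_one,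
      smul_mul_smul, smul_smul, mul_one]

/-- The standard splitting of a matrix algebra over the base field. -/
theorem matrix : IsSplitting σ n ((Algebra.ofId K L).mapMatrix : Matrix ι ι K →ₐ[K] Matrix ι ι L)
    1 1 := by
  refine ⟨?_, inferInstance, by simp [Module.finrank_matrix], one_ne_zero, isUnit_one, fun X => ?_,
    ?_⟩
  · refine eq_top_iff.2 fun X _ => ?_
    rw [Matrix.matrix_eq_sum_single X]
    refine Submodule.sum_mem _ fun i _ => Submodule.sum_mem _ fun k _ => ?_
    have : Matrix.single i k (X i k) =
        X i k • (Algebra.ofId K L).mapMatrix (Matrix.single i k (1 : K)) := by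
      rw [AlgHom.mapMatrix_apply, Matrix.map_single, map_one, Matrix.smul_single, smul_eq_mul,
        mul_one]
    rw [this]
    exact Submodule.smul_mem _ _ (Submodule.subset_span ⟨_, rfl⟩)
  · rw [one_mul, mul_one]
    ext
    simp [Algebra.ofId_apply]
  · rw [twistPow_of_fixed _ (map_one _), one_pow, inv_one, map_one]

/-- Matrix algebras over a split algebra are split with the same parameter. -/
theorem exists_matrix {j : A →ₐ[K] Matrix ι ι L} {P : Matrix ι ι L} {b : K}
    (h : IsSplitting σ n j P b) :
    ∃ (j' : Matrix κ κ A →ₐ[K] Matrix (ι × κ) (ι × κ) L) (P' : Matrix (ι × κ) (ι × κ) L),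
      IsSplitting σ n j' P' b := by
  have := (h.tensor (matrix (ι := κ))).transport (matrixEquivTensor κ K A) (Equiv.refl _)
  rw [mul_one] at this
  exact ⟨_, _, this⟩

end Constructions

section Galois

variable {K L ι A : Type*} [Field K] [Field L] [Algebra K L] [FiniteDimensional K L]
  [IsGalois K L] [Fintype ι] [DecidableEq ι] [Nonempty ι] [Ring A] [Algebra K A] {σ : L ≃ₐ[K] L}
  (hσ : ∀ τ : L ≃ₐ[K] L, τ ∈ Subgroup.zpowers σ)

include hσ

/-- Two splittings of an algebra have parameters differing by a norm. -/
theorem exists_norm {j₁ j₂ : A →ₐ[K] Matrix ι ι L} {P₁ P₂ : Matrix ι ι L} {b₁ b₂ : K}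
    (h₁ : IsSplitting σ (Module.finrank K L) j₁ P₁ b₁)
    (h₂ : IsSplitting σ (Module.finrank K L) j₂ P₂ b₂) :
    ∃ x : L, x ≠ 0 ∧ b₁ = Algebra.norm K x * b₂ := by
  have := h₁.finite
  obtain ⟨Q, hQ, hQj⟩ := exists_conj_of_span_eq_top h₁.span_eq_top h₁.finrank_le j₂
  obtain ⟨u, rfl⟩ := hQ
  obtain ⟨p, rfl⟩ := h₁.isUnit
  let X : Matrix ι ι L := u⁻¹.val * P₂ * matConj ι σ u * p⁻¹.val
  have hX (a : A) : Commute X (j₁ a) := by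
    have h1 : p⁻¹.val * j₁ a = matConj ι σ (j₁ a) * p⁻¹.val := by
      rw [Units.inv_mul_eq_iff_eq_mul, ← mul_assoc, h₁.comm, mul_assoc, Units.mul_inv, mul_one]
    have h2 : u⁻¹.val * j₂ a = j₁ a * u⁻¹.val := by
      rw [Units.inv_mul_eq_iff_eq_mul, ← mul_assoc, hQj, mul_assoc, Units.mul_inv, mul_one]
    calc X * j₁ a = u⁻¹.val * P₂ * matConj ι σ u * (p⁻¹.val * j₁ a) := by
          simp only [X, mul_assoc]
      _ = u⁻¹.val * P₂ * matConj ι σ (u * j₁ a) * p⁻¹.val := by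
          rw [h1, map_mul]; simp only [mul_assoc]
      _ = u⁻¹.val * (P₂ * matConj ι σ (j₂ a)) * matConj ι σ u * p⁻¹.val := by
          rw [hQj, map_mul]; simp only [mul_assoc]
      _ = u⁻¹.val * j₂ a * P₂ * matConj ι σ u * p⁻¹.val := by
          rw [h₂.comm]; simp only [mul_assoc]
      _ = j₁ a * X := by rw [h2]; simp only [X, mul_assoc]
  obtain ⟨c, hc⟩ := exists_eq_smul_one_of_commute h₁.span_eq_top
    (X := X) (by rintro _ ⟨a, rfl⟩; exact hX a)
  have hint : P₂ * matConj ι σ u = c • (u.val * p.val) := by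
    have : u.val * X * p.val = P₂ * matConj ι σ u := by
      simp only [X, mul_assoc, Units.inv_mul, mul_one, Units.mul_inv_cancel_left]
    rw [← this, hc]
    simp
  have hpow := twistPow_mul_of_intertwine σ hint (Module.finrank K L)
  rw [h₁.pow, h₂.pow, iterate_matConj_finrank hσ, twistPow_eq_norm hσ, algebraMap_smul,
    ← Algebra.commutes, Algebra.smul_def, ← mul_assoc, ← map_mul, Units.mul_left_inj] at hpow
  have hK : b₂⁻¹ = Algebra.norm K c * b₁⁻¹ :=
    FaithfulSMul.algebraMap_injective K (Matrix ι ι L) hpow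
  have hb : b₁ = Algebra.norm K c * b₂ := by
    have h1 := h₁.ne_zero
    have h2 := h₂.ne_zero
    field_simp at hK
    rw [hK, mul_comm]
  refine ⟨c, ?_, hb⟩
  rintro rfl
  exact h₁.ne_zero (by rw [hb, Algebra.norm_zero, zero_mul])

/-- Every algebra which becomes a matrix algebra over `L` has a splitting. -/
theorem exists_of_equiv (e : L ⊗[K] A ≃ₐ[L] Matrix ι ι L) [Module.Finite K A] :
    ∃ (j : A →ₐ[K] Matrix ι ι L) (P : Matrix ι ι L) (b : K),
      IsSplitting σ (Module.finrank K L) j P b := by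
  let j : A →ₐ[K] Matrix ι ι L :=
    (e.toAlgHom.restrictScalars K).comp Algebra.TensorProduct.includeRight
  have hspan : Submodule.span L (Set.range j) = ⊤ := by
    rw [Submodule.eq_top_iff']
    intro X
    obtain ⟨t, rfl⟩ := e.surjective X
    induction t with
    | zero => simp
    | add s t hs ht => rw [map_add]; exact Submodule.add_mem _ hs ht
    | tmul x a =>
      have : e (x ⊗ₜ a) = x • j a := by
        change e (x ⊗ₜ a) = x • e (1 ⊗ₜ a)
        rw [← map_smul, TensorProduct.smul_tmul', smul_eq_mul, mul_one]
      rw [this]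
      exact Submodule.smul_mem _ _ (Submodule.subset_span ⟨a, rfl⟩)
  have hrank : Module.finrank K A = Fintype.card ι * Fintype.card ι := by
    simpa [Module.finrank_matrix, Module.finrank_baseChange] using e.toLinearEquiv.finrank_eq
  have hspan' : Submodule.span L (Set.range ((matConj ι σ).comp j)) = ⊤ := by
    have key (X : Matrix ι ι L) :
        matConj ι σ X ∈ Submodule.span L (Set.range ((matConj ι σ).comp j)) := by
      have hX : X ∈ Submodule.span L (Set.range j) := hspan ▸ Submodule.mem_top
      induction hX using Submodule.span_induction with
      | mem X hX => obtain ⟨a, rfl⟩ := hX; exact Submodule.subset_span ⟨a, rfl⟩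
      | zero => simp
      | add X Y _ _ hX hY => rw [map_add]; exact Submodule.add_mem _ hX hY
      | smul c X _ hX => rw [matConj_smul]; exact Submodule.smul_mem _ _ hX
    refine eq_top_iff.2 fun X _ => ?_
    convert key (matConj ι σ.symm X)
    ext
    simp
  obtain ⟨P, hP, hcomm⟩ := exists_conj_of_span_eq_top hspan' hrank.le j
  have hiter (X : Matrix ι ι L) (hX : P * matConj ι σ X = X * P) :
      Commute (twistPow (matConj ι σ) P (Module.finrank K L)) X := by
    have := twistPow_mul_of_intertwine σ (P₁ := P) (P₂ := P) (Q := X) (c := 1) (by simpa using hX)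
      (Module.finrank K L)
    rw [iterate_matConj_finrank hσ, twistPow_of_fixed σ (map_one σ), one_pow, one_smul] at this
    exact this
  obtain ⟨c, hc⟩ := exists_eq_smul_one_of_commute hspan
    (X := twistPow (matConj ι σ) P (Module.finrank K L))
    (by rintro _ ⟨a, rfl⟩; exact hiter _ (hcomm a))
  have hunit (k : ℕ) : IsUnit (twistPow (matConj ι σ) P k) := by
    induction k with
    | zero => exact isUnit_one
    | succ k ih => exact hP.mul (ih.map _)
  have hc0 : c ≠ 0 := by
    rintro rfl
    have := hunit (Module.finrank K L)
    rw [hc, zero_smul] at this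
    exact not_isUnit_zero this
  have hfix : σ c = c := by
    have hcomm' : P * matConj ι σ (c • 1) = (c • 1) * P := by
      rw [← hc, ← twistPow, twistPow_succ_right, iterate_matConj_finrank hσ]
    rw [matConj_smul, map_one, mul_smul_comm, mul_one, smul_mul_assoc, one_mul] at hcomm'
    have := congr($hcomm' * (hP.unit⁻¹).val)
    rw [smul_mul_assoc, smul_mul_assoc, IsUnit.mul_val_inv] at this
    obtain ⟨i⟩ := ‹Nonempty ι›
    simpa using congr($this i i)
  have hmem : c ∈ Set.range (algebraMap K L) := by
    rw [IsGalois.mem_range_algebraMap_iff_fixed]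
    intro τ
    obtain ⟨k, rfl⟩ := exists_pow_of_generator hσ τ
    rw [AlgEquiv.coe_pow]
    exact Function.iterate_fixed hfix k
  obtain ⟨d, rfl⟩ := hmem
  have hd : d ≠ 0 := by rintro rfl; simp at hc0
  refine ⟨j, P, d⁻¹, hspan, inferInstance, hrank.le, inv_ne_zero hd, hP, hcomm, ?_⟩
  rw [hc, inv_inv, algebraMap_smul, Algebra.algebraMap_eq_smul_one]

end Galois

end IsSplitting

section Similarity

variable {K L : Type*} [Field K] [Field L] [Algebra K L] [FiniteDimensional K L]
  [IsGalois K L] {σ : L ≃ₐ[K] L} (hσ : ∀ τ : L ≃ₐ[K] L, τ ∈ Subgroup.zpowers σ)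

include hσ

namespace CyclicAlg

theorem finrank_eq {b : K} (hb : b ≠ 0) :
    Module.finrank K (CyclicAlg K L σ (Module.finrank K L) b) =
      Module.finrank K L * Module.finrank K L := by
  classical
  have h := isSplitting_reg hσ hb
  have := h.finite
  have hcard : Fintype.card (L ≃ₐ[K] L) = Module.finrank K L := by
    rw [← Nat.card_eq_fintype_card, IsGalois.card_aut_eq_finrank]
  simpa only [hcard] using h.finrank_le.antisymm (card_mul_card_le_finrank h.span_eq_top)

/-- The cyclic algebra `(L/K, 1)` is a matrix algebra. -/
theorem nonempty_equiv_matrix :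
    Nonempty (CyclicAlg K L σ (Module.finrank K L) 1 ≃ₐ[K]
      Matrix (Fin (Module.finrank K L)) (Fin (Module.finrank K L)) K) := by
  let φ : CyclicAlg K L σ (Module.finrank K L) 1 →ₐ[K] Module.End K L :=
    lift (Algebra.lmul K L) σ.toLinearMap
      (by
        ext x
        rw [Module.End.pow_apply]
        change σ^[Module.finrank K L] x = _
        rw [← AlgEquiv.coe_pow, pow_finrank_eq_one hσ]
        simp)
      (fun x => by ext; simp)
  have hcard : Fintype.card (L ≃ₐ[K] L) = Module.finrank K L := by
    rw [← Nat.card_eq_fintype_card, IsGalois.card_aut_eq_finrank]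
  have hli : LinearIndependent L fun τ : L ≃ₐ[K] L => (τ : L →ₐ[K] L).toLinearMap :=
    (linearIndependent_toLinearMap K L L).comp _ AlgEquiv.coe_toAlgHom_injective
  have hspan := hli.span_eq_top_of_card_eq_finrank' (by
    rw [hcard, Module.finrank_linearMap_self])
  have hsurj : Function.Surjective φ := fun f => by
    have hf : f ∈ Submodule.span L
        (Set.range fun τ : L ≃ₐ[K] L => (τ : L →ₐ[K] L).toLinearMap) := hspan ▸ Submodule.mem_top
    induction hf using Submodule.span_induction with
    | mem f hf =>
      obtain ⟨τ, rfl⟩ := hf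
      obtain ⟨k, rfl⟩ := exists_pow_of_generator hσ τ
      refine ⟨cycV K L σ _ 1 ^ k, ?_⟩
      ext x
      rw [map_pow, lift_cycV, Module.End.pow_apply]
      change σ^[k] x = (σ ^ k) x
      rw [AlgEquiv.coe_pow]
    | zero => exact ⟨0, map_zero φ⟩
    | add f g _ _ hf hg =>
      obtain ⟨x, rfl⟩ := hf
      obtain ⟨y, rfl⟩ := hg
      exact ⟨x + y, map_add φ x y⟩
    | smul c f _ hf =>
      obtain ⟨x, rfl⟩ := hf
      refine ⟨incl σ _ 1 c * x, ?_⟩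
      rw [map_mul, lift_incl]
      ext
      simp
  have := finite σ (1 : K) (Module.finrank_pos (R := K) (M := L))
  have hinj : Function.Injective φ :=
    (LinearMap.injective_iff_surjective_of_finrank_eq_finrank (f := φ.toLinearMap) (by
      rw [finrank_eq hσ one_ne_zero, Module.finrank_linearMap])).2 hsurj
  exact ⟨(AlgEquiv.ofBijective φ ⟨hinj, hsurj⟩).trans (algEquivMatrix (Module.finBasis K L))⟩

end CyclicAlg

open CyclicAlg in
/-- An algebra with a splitting of parameter `b` is similar to the cyclic algebra `(L/K, b)`. -/
theorem IsSplitting.brauerEquiv {ι A : Type*} [Fintype ι] [DecidableEq ι] [Nonempty ι] [Ring A]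
    [Algebra K A] {j : A →ₐ[K] Matrix ι ι L} {P : Matrix ι ι L} {b : K}
    (h : IsSplitting σ (Module.finrank K L) j P b) :
    BrauerEquiv K A (CyclicAlg K L σ (Module.finrank K L) b) := by
  have := h.finite
  have := CyclicAlg.finite σ b (Module.finrank_pos (R := K) (M := L))
  have := CyclicAlg.finite σ (1 : K) (Module.finrank_pos (R := K) (M := L))
  let E : Matrix ι ι L →ₐ[K] Matrix ι ι (CyclicAlg K L σ (Module.finrank K L) b) :=
    (incl σ _ b).mapMatrix
  let W : Matrix ι ι (CyclicAlg K L σ (Module.finrank K L) b) :=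
    Matrix.diagonal fun _ => cycV K L σ _ b
  have hW (X : Matrix ι ι L) : W * E X = E (matConj ι σ X) * W := by
    ext i k
    simp [W, E, Matrix.diagonal_mul, Matrix.mul_diagonal, cycV_mul_incl]
  have hWn : W ^ Module.finrank K L = algebraMap K _ b := by
    ext i k
    rw [Matrix.diagonal_pow, Matrix.algebraMap_matrix_apply, Matrix.diagonal_apply, Pi.pow_apply,
      cycV_pow]
  have hpow (k : ℕ) : (E P * W) ^ k = E (twistPow (matConj ι σ) P k) * W ^ k := by
    induction k with
    | zero => simp [twistPow]
    | succ k ih =>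
      rw [pow_succ', ih, mul_assoc, ← mul_assoc W, hW, twistPow, map_mul, pow_succ']
      simp only [mul_assoc]
  let f : L →ₐ[K] Matrix ι ι (CyclicAlg K L σ (Module.finrank K L) b) :=
    E.comp ((Algebra.ofId L (Matrix ι ι L)).restrictScalars K)
  have hf (x : L) : f x = E (algebraMap L _ x) := rfl
  have hconj (x : L) : matConj ι σ (algebraMap L _ x) = algebraMap L _ (σ x) := by
    rw [Algebra.algebraMap_eq_smul_one, matConj_smul, map_one, Algebra.algebraMap_eq_smul_one]
  let g : CyclicAlg K L σ (Module.finrank K L) 1 →ₐ[K]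
      Matrix ι ι (CyclicAlg K L σ (Module.finrank K L) b) :=
    lift f (E P * W)
      (by rw [hpow, h.pow, hWn, AlgHom.commutes, ← map_mul, inv_mul_cancel₀ h.ne_zero])
      (fun x => by
        rw [hf, hf, mul_assoc, hW, hconj, ← mul_assoc, ← mul_assoc, ← map_mul, ← map_mul,
          Algebra.commutes])
  have hcomm (a : A) (y : CyclicAlg K L σ (Module.finrank K L) 1) :
      Commute ((E.comp j) a) (g y) := by
    induction y using CyclicAlg.induction with
    | incl x =>
      rw [lift_incl]
      exact (Algebra.commute_algebraMap_right x (j a)).map E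
    | cycV =>
      rw [lift_cycV]
      change E (j a) * (E P * W) = E P * W * E (j a)
      rw [mul_assoc, hW, ← mul_assoc, ← mul_assoc, ← map_mul, ← map_mul, h.comm]
    | mul x y hx hy => rw [map_mul]; exact hx.mul_right hy
    | add x y hx hy => rw [map_add]; exact hx.add_right hy
  let Φ := Algebra.TensorProduct.lift (E.comp j) g hcomm
  have hΦ (a : A) (y : CyclicAlg K L σ (Module.finrank K L) 1) :
      Φ (a ⊗ₜ y) = E (j a) * g y := Algebra.TensorProduct.lift_tmul ..
  have hE (X : Matrix ι ι L) : E X ∈ Φ.range := by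
    have hX : X ∈ Submodule.span L (Set.range j) := h.span_eq_top ▸ Submodule.mem_top
    induction hX using Submodule.span_induction with
    | mem X hX => obtain ⟨a, rfl⟩ := hX; exact ⟨a ⊗ₜ 1, by simp [hΦ]⟩
    | zero => simp
    | add X Y _ _ hX hY => rw [map_add]; exact add_mem hX hY
    | smul c X _ hX =>
      rw [Algebra.smul_def, map_mul]
      exact mul_mem ⟨1 ⊗ₜ incl σ _ 1 c, by simp [hΦ, g, hf]⟩ hX
  have hWmem : W ∈ Φ.range := by
    obtain ⟨p, rfl⟩ := h.isUnit
    have : W = E p⁻¹.val * Φ (1 ⊗ₜ cycV K L σ _ 1) := by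
      rw [hΦ, lift_cycV, map_one, map_one, one_mul, ← mul_assoc, ← map_mul, Units.inv_mul, map_one,
        one_mul]
    rw [this]
    exact mul_mem (hE _) ⟨_, rfl⟩
  have hsurj : Function.Surjective Φ := by
    rw [← AlgHom.range_eq_top]
    refine eq_top_iff.2 fun Y _ => ?_
    rw [Matrix.matrix_eq_sum_single Y]
    refine sum_mem fun i _ => sum_mem fun k _ => ?_
    have hy : Y i k ∈ Submodule.span K (Set.range fun p : L × ℕ =>
        incl σ _ b p.1 * cycV K L σ (Module.finrank K L) b ^ p.2) :=
      span_monomials σ _ b ▸ Submodule.mem_top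
    generalize Y i k = y at hy ⊢
    induction hy using Submodule.span_induction with
    | mem y hy =>
      obtain ⟨⟨x, m⟩, rfl⟩ := hy
      have : Matrix.single i k (incl σ _ b x * cycV K L σ (Module.finrank K L) b ^ m) =
          E (Matrix.single i k x) * W ^ m := by
        ext r s
        simp [E, W, Matrix.diagonal_pow, Matrix.mul_diagonal, Matrix.single_apply, ite_mul]
      simp only [this]
      exact mul_mem (hE _) (pow_mem hWmem _)
    | zero => simp
    | add x y _ _ hx hy => rw [Matrix.single_add]; exact add_mem hx hy
    | smul c x _ hx => rw [← Matrix.smul_single]; exact Subalgebra.smul_mem _ hx c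
  have hinj : Function.Injective Φ :=
    (LinearMap.injective_iff_surjective_of_finrank_eq_finrank (f := Φ.toLinearMap) (by
      rw [Module.finrank_tensorProduct, Module.finrank_matrix, finrank_eq hσ one_ne_zero,
        finrank_eq hσ h.ne_zero,
        h.finrank_le.antisymm (card_mul_card_le_finrank h.span_eq_top)])).2 hsurj
  obtain ⟨e⟩ := nonempty_equiv_matrix hσ
  exact ⟨Module.finrank K L, Fintype.card ι, Module.finrank_pos, Fintype.card_pos,
    ⟨(matrixEquivTensor _ K A).trans ((Algebra.TensorProduct.congr AlgEquiv.refl e.symm).trans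
      ((AlgEquiv.ofBijective Φ ⟨hinj, hsurj⟩).trans
        (Matrix.reindexAlgEquiv K _ (Fintype.equivFin ι))))⟩⟩

namespace CyclicAlg

/-- Multiplying the parameter by a norm does not change the cyclic algebra. -/
theorem nonempty_equiv_of_norm {b₁ b₂ : K} (hb₁ : b₁ ≠ 0) (hb₂ : b₂ ≠ 0) {x : L}
    (hx : b₁ = Algebra.norm K x * b₂) :
    Nonempty (CyclicAlg K L σ (Module.finrank K L) b₁ ≃ₐ[K]
      CyclicAlg K L σ (Module.finrank K L) b₂) := by
  have hx0 : x ≠ 0 := by rintro rfl; simp at hx; exact hb₁ hx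
  have := finite σ b₁ (Module.finrank_pos (R := K) (M := L))
  have := finite σ b₂ (Module.finrank_pos (R := K) (M := L))
  set w := incl σ (Module.finrank K L) b₂ x * cycV K L σ _ b₂
  have hpow (k : ℕ) : w ^ k = incl σ _ b₂ (twistPow σ x k) * cycV K L σ _ b₂ ^ k := by
    induction k with
    | zero => simp [twistPow]
    | succ k ih =>
      rw [pow_succ', ih, mul_assoc, ← mul_assoc (cycV K L σ _ b₂), cycV_mul_incl, twistPow, map_mul,
        pow_succ']
      simp only [mul_assoc]
  let φ : CyclicAlg K L σ (Module.finrank K L) b₁ →ₐ[K] CyclicAlg K L σ (Module.finrank K L) b₂ :=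
    lift (incl σ _ b₂) w
      (by rw [hpow, twistPow_eq_norm hσ, AlgHom.commutes, cycV_pow, ← map_mul, hx])
      (fun y => by
        rw [mul_assoc, cycV_mul_incl, ← mul_assoc, ← mul_assoc, ← map_mul, ← map_mul, mul_comm x])
  have hsurj : Function.Surjective φ := fun y => by
    change y ∈ φ.range
    induction y using CyclicAlg.induction with
    | incl y => exact ⟨incl σ _ b₁ y, lift_incl ..⟩
    | cycV =>
      refine ⟨incl σ _ b₁ x⁻¹ * cycV K L σ _ b₁, ?_⟩
      change φ _ = _
      rw [map_mul, lift_incl, lift_cycV, ← mul_assoc, ← map_mul,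
        inv_mul_cancel₀ hx0, map_one, one_mul]
    | mul x y hx hy => exact mul_mem hx hy
    | add x y hx hy => exact add_mem hx hy
  have hinj : Function.Injective φ :=
    (LinearMap.injective_iff_surjective_of_finrank_eq_finrank (f := φ.toLinearMap)
      ((finrank_eq hσ hb₁).trans (finrank_eq hσ hb₂).symm)).2 hsurj
  exact ⟨AlgEquiv.ofBijective φ ⟨hinj, hsurj⟩⟩

theorem exists_norm_of_brauerEquiv {b₁ b₂ : K} (hb₁ : b₁ ≠ 0) (hb₂ : b₂ ≠ 0)
    (h : BrauerEquiv K (CyclicAlg K L σ (Module.finrank K L) b₁)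
      (CyclicAlg K L σ (Module.finrank K L) b₂)) :
    ∃ x : L, x ≠ 0 ∧ b₁ = Algebra.norm K x * b₂ := by
  classical
  obtain ⟨m, k, hm, -, ⟨e⟩⟩ := h
  have : Nonempty (Fin m) := ⟨⟨0, hm⟩⟩
  have hmk : m = k := by
    have := e.toLinearEquiv.finrank_eq
    rw [Module.finrank_matrix, Module.finrank_matrix, finrank_eq hσ hb₁, finrank_eq hσ hb₂] at this
    have hpos := Module.finrank_pos (R := K) (M := L)
    have := Nat.eq_of_mul_eq_mul_right (Nat.mul_pos hpos hpos) this
    simpa [← sq] using this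
  subst hmk
  obtain ⟨j₁, P₁, h₁⟩ := (isSplitting_reg hσ hb₁).exists_matrix (κ := Fin m)
  obtain ⟨j₂, P₂, h₂⟩ := (isSplitting_reg hσ hb₂).exists_matrix (κ := Fin m)
  exact h₁.exists_norm hσ (h₂.transport e (Equiv.refl _))

end CyclicAlg

end Similarity

/-- Let `L/K` be a cyclic Galois extension of degree `n` with `Gal(L/K) = ⟨σ⟩`.  The map
`K^×/N_{L/K}(L^×) → Br(L/K)`, sending the class of `b` to the class of the cyclic algebra
`(L/K, b)`, is a group isomorphism onto the relative Brauer group: it is a homomorphism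
(`(L/K,b₁) ⊗ (L/K,b₂)` is Brauer-equivalent to `(L/K,b₁b₂)`), it identifies classes of
cyclic algebras exactly when the parameters differ by a norm from `L^×`, and every finite
dimensional central simple `K`-algebra split by `L` is Brauer-equivalent to some
`(L/K,b)`. -/
theorem cyclic_algebra_brauer_group_iso (K L : Type u) [Field K] [Field L] [Algebra K L]
    [IsGalois K L] [FiniteDimensional K L] (n : ℕ) (hn : 0 < n)
    (hdeg : Module.finrank K L = n) (σ : L ≃ₐ[K] L)
    (hσ : ∀ τ : L ≃ₐ[K] L, τ ∈ Subgroup.zpowers σ) :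
    (∀ b₁ b₂ : K, b₁ ≠ 0 → b₂ ≠ 0 →
      BrauerEquiv K (TensorProduct K (CyclicAlg K L σ n b₁) (CyclicAlg K L σ n b₂))
        (CyclicAlg K L σ n (b₁ * b₂))) ∧
    (∀ b₁ b₂ : K, b₁ ≠ 0 → b₂ ≠ 0 →
      (BrauerEquiv K (CyclicAlg K L σ n b₁) (CyclicAlg K L σ n b₂) ↔
        ∃ x : L, x ≠ 0 ∧ b₁ = Algebra.norm K x * b₂)) ∧
    (∀ (A : Type u) [Ring A] [Algebra K A], FiniteDimensional K A →
      Algebra.IsCentral K A → IsSimpleRing A →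
      (∃ m : ℕ, 0 < m ∧
        Nonempty (TensorProduct K L A ≃ₐ[L] Matrix (Fin m) (Fin m) L)) →
      ∃ b : K, b ≠ 0 ∧ BrauerEquiv K A (CyclicAlg K L σ n b)) := by
  subst hdeg
  classical
  refine ⟨fun b₁ b₂ hb₁ hb₂ => ?_, fun b₁ b₂ hb₁ hb₂ => ⟨fun h => ?_, fun ⟨x, _, hx⟩ => ?_⟩,
    fun A _ _ _ _ _ ⟨m, hm, ⟨e⟩⟩ => ?_⟩
  · exact ((CyclicAlg.isSplitting_reg hσ hb₁).tensor
      (CyclicAlg.isSplitting_reg hσ hb₂)).brauerEquiv hσ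
  · exact CyclicAlg.exists_norm_of_brauerEquiv hσ hb₁ hb₂ h
  · obtain ⟨e⟩ := CyclicAlg.nonempty_equiv_of_norm hσ hb₁ hb₂ hx
    exact ⟨1, 1, one_pos, one_pos, ⟨e.mapMatrix⟩⟩
  · have : Nonempty (Fin m) := ⟨⟨0, hm⟩⟩
    obtain ⟨j, P, b, h⟩ := IsSplitting.exists_of_equiv hσ e
    exact ⟨b, h.ne_zero, h.brauerEquiv hσ⟩
end
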